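/- arXiv:1611.02249 — 6 statements merged into one kernel-verified Lean document; each statement's English description precedes it below -/
import Mathlib

section
/- Let U, P, L be the parsimonious relations on the 28-element set H of major, minor, and augmented triads. Then, in the monoid of binary relations on H under relational composition, U ∘ U ∘ U = U. -/
/-- The 28-element set of the 24 major and minor triads and the 4 augmented triads:
`Sum.inl n` is the major triad `n_M`, `Sum.inr (Sum.inl n)` is the minor triad `n_m`,
and `Sum.inr (Sum.inr k)` is the augmented triad `k_aug`. -/
abbrev Htriads : Type := (ZMod 12) ⊕ (ZMod 12) ⊕ (ZMod 4)

/-- Binary relations on `Htriads`. -/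
abbrev MRel : Type := Htriads → Htriads → Prop

/-- The monoid of binary relations on `Htriads`: `r * s` relates `x` to `z` iff there is `y`
with `x r y` and `y s z` (i.e. first apply `r`, then `s`), and `1` is the equality relation. -/
instance : Monoid MRel where
  one := fun x y => x = y
  mul := fun r s => fun x z => ∃ y, r x y ∧ s y z
  mul_assoc r s t := by
    funext x z
    apply propext
    constructor
    · rintro ⟨y, ⟨w, hw1, hw2⟩, hy⟩
      exact ⟨w, hw1, y, hw2, hy⟩
    · rintro ⟨w, hw1, y, hy1, hy2⟩
      exact ⟨y, ⟨w, hw1, hy1⟩, hy2⟩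
  one_mul r := by
    funext x z
    apply propext
    constructor
    · rintro ⟨y, rfl, h⟩
      exact h
    · intro h
      exact ⟨x, rfl, h⟩
  mul_one r := by
    funext x z
    apply propext
    constructor
    · rintro ⟨y, h, rfl⟩
      exact h
    · intro h
      exact ⟨z, h, rfl⟩

/-- The major triad on root `n`. -/
def maj (n : ZMod 12) : Htriads := Sum.inl n
/-- The minor triad on root `n`. -/
def mino (n : ZMod 12) : Htriads := Sum.inr (Sum.inl n)
/-- The augmented triad `k_aug`, `k ∈ ℤ/4`. -/
def aug (k : ZMod 4) : Htriads := Sum.inr (Sum.inr k)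

/-- Reduction mod 4 of a pitch class mod 12. -/
def m4 (n : ZMod 12) : ZMod 4 := ZMod.castHom (show (4:ℕ) ∣ 12 by norm_num) (ZMod 4) n

/-- The relation `𝒰`: the symmetric relation relating exactly `n_M` with `(n mod 4)_aug`
and `n_m` with `((n+3) mod 4)_aug`. -/
def Urel : MRel := fun x y =>
  (∃ n : ZMod 12, x = maj n ∧ y = aug (m4 n)) ∨
  (∃ n : ZMod 12, x = aug (m4 n) ∧ y = maj n) ∨
  (∃ n : ZMod 12, x = mino n ∧ y = aug (m4 (n + 3))) ∨
  (∃ n : ZMod 12, x = aug (m4 (n + 3)) ∧ y = mino n)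

/-- The relation `𝒫`: the symmetric relation relating exactly `n_M` with `n_m`,
and each augmented triad with itself. -/
def Prel : MRel := fun x y =>
  (∃ n : ZMod 12, x = maj n ∧ y = mino n) ∨
  (∃ n : ZMod 12, x = mino n ∧ y = maj n) ∨
  (∃ k : ZMod 4, x = aug k ∧ y = aug k)

/-- The relation `ℒ`: the symmetric relation relating exactly `n_M` with `(n+4)_m`,
and each augmented triad with itself. -/
def Lrel : MRel := fun x y =>
  (∃ n : ZMod 12, x = maj n ∧ y = mino (n + 4)) ∨
  (∃ n : ZMod 12, x = mino (n + 4) ∧ y = maj n) ∨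
  (∃ k : ZMod 4, x = aug k ∧ y = aug k)

/-- Douthett's parsimonious relation `𝒮 = P_{1,0}` on major, minor and augmented triads. -/
def Srel : MRel := fun x y =>
  (∃ n : ZMod 12, x = maj n ∧ y = mino n) ∨
  (∃ n : ZMod 12, x = mino n ∧ y = maj n) ∨
  (∃ n : ZMod 12, x = maj n ∧ y = mino (n + 4)) ∨
  (∃ n : ZMod 12, x = mino (n + 4) ∧ y = maj n) ∨
  (∃ n : ZMod 12, x = maj n ∧ y = aug (m4 n)) ∨
  (∃ n : ZMod 12, x = aug (m4 n) ∧ y = maj n) ∨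
  (∃ n : ZMod 12, x = mino n ∧ y = aug (m4 (n + 3))) ∨
  (∃ n : ZMod 12, x = aug (m4 (n + 3)) ∧ y = mino n)

/-- Douthett's parsimonious relation `𝒯 = P_{2,0}` on major, minor and augmented triads. -/
def Trel : MRel := fun x y =>
  (∃ n : ZMod 12, x = maj n ∧ y = maj (n + 4)) ∨
  (∃ n : ZMod 12, x = maj n ∧ y = maj (n + 8)) ∨
  (∃ n : ZMod 12, x = maj n ∧ y = mino (n + 1)) ∨
  (∃ n : ZMod 12, x = mino (n + 1) ∧ y = maj n) ∨
  (∃ n : ZMod 12, x = maj n ∧ y = mino (n + 5)) ∨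
  (∃ n : ZMod 12, x = mino (n + 5) ∧ y = maj n) ∨
  (∃ n : ZMod 12, x = maj n ∧ y = aug (m4 (n + 3))) ∨
  (∃ n : ZMod 12, x = aug (m4 (n + 3)) ∧ y = maj n) ∨
  (∃ n : ZMod 12, x = mino n ∧ y = mino (n + 4)) ∨
  (∃ n : ZMod 12, x = mino n ∧ y = mino (n + 8)) ∨
  (∃ n : ZMod 12, x = mino n ∧ y = aug (m4 n)) ∨
  (∃ n : ZMod 12, x = aug (m4 n) ∧ y = mino n)

/-!
Each triad has a class in `ZMod 4` and one of two colours (augmented or not), and `𝒰` relates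
exactly the triads of the same class and opposite colours. It is therefore symmetric and
difunctional, being the fibre product `f x = g y` of two functions; and a difunctional relation
satisfies `r rᵒᵖ r = r`, where `rᵒᵖ = r` by symmetry.
-/

open Relation

section Difunctional

variable {α β γ : Type*} {r : α → β → Prop}

/-- A relation is difunctional if any two rows that share a column agree, i.e. if it is a disjoint
union of rectangles. -/
def Difunctional (r : α → β → Prop) : Prop :=
  ∀ ⦃a b c d⦄, r a b → r c b → r c d → r a d

theorem difunctional_of_iff_eq {f : α → γ} {g : β → γ} (h : ∀ a b, r a b ↔ f a = g b) :
    Difunctional r := by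
  intro a b c d hab hcb hcd
  rw [h] at hab hcb hcd ⊢
  exact (hab.trans hcb.symm).trans hcd

theorem Difunctional.comp_flip_comp (hr : Difunctional r) : Comp (Comp r (flip r)) r = r := by
  ext a d
  constructor
  · rintro ⟨c, ⟨b, hab, hcb⟩, hcd⟩
    exact hr hab hcb hcd
  · intro had
    exact ⟨a, ⟨d, had, had⟩, had⟩

end Difunctional

theorem MRel.mul_eq_comp (r s : MRel) : r * s = Comp r s :=
  rfl

/-- The augmented triad `k_aug` to which a major or minor triad is `𝒰`-related, encoded by its
index `k`; an augmented triad is assigned its own index. -/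
def augIndex : Htriads → ZMod 4
  | .inl n => m4 n
  | .inr (.inl n) => m4 (n + 3)
  | .inr (.inr k) => k

/-- Whether a triad is augmented; as `𝒰` pairs augmented triads with the others, this is the
two-colouring of its bipartite graph. -/
def isAug : Htriads → Bool
  | .inl _ | .inr (.inl _) => false
  | .inr (.inr _) => true

theorem Urel_iff (x y : Htriads) : Urel x y ↔ augIndex x = augIndex y ∧ isAug x ≠ isAug y := by
  rcases x with n | n | k <;> rcases y with m | m | l <;>
    simp [Urel, maj, mino, aug, augIndex, isAug, eq_comm]

instance Urel.instSymm : Std.Symm Urel where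
  symm x y hxy := by
    rw [Urel_iff] at hxy ⊢
    exact ⟨hxy.1.symm, hxy.2.symm⟩

theorem difunctional_Urel : Difunctional Urel := by
  refine difunctional_of_iff_eq (f := fun x => (augIndex x, isAug x))
    (g := fun y => (augIndex y, !isAug y)) fun x y => ?_
  rw [Urel_iff, Prod.mk.injEq, Bool.eq_not]

/-- In the monoid of binary relations on `Htriads`, `U ∘ U ∘ U = U`. -/
theorem stmt0 : Urel * Urel * Urel = Urel := by
  calc Urel * Urel * Urel = Comp (Comp Urel (flip Urel)) Urel := by
        rw [Std.Symm.flip_eq, MRel.mul_eq_comp, MRel.mul_eq_comp]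
    _ = Urel := difunctional_Urel.comp_flip_comp
end

section
/- Let P and L be the parsimonious relations on the 28-element set H of major, minor, and augmented triads. In the monoid of binary relations on H under relational composition, L ∘ P ∘ L = P ∘ L ∘ P. -/
/-!
For `t` in an additive group, let `W_t` fix the augmented triads and exchange `n_M` with
`(n + t)_m`. Then `W_s ∘ W_t ∘ W_s = W_{s - t + s}`, since it sends `n_M` through `(n + s)_m` and
`(n + s - t)_M` to `(n + s - t + s)_m`. The relations `P` and `L` are the graphs of `W_0` and
`W_4` on `ℤ/12`, so the braid relation reduces to `4 - 0 + 4 = 0 - 4 + 0`, that is, to `3 * 4 = 0`.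
-/

section Wechsel

variable {G K : Type*} [AddGroup G]

/-- The Wechsel of interval `t`: the mode-exchanging transformation `n_M ↦ (n + t)_m`,
`n_m ↦ (n - t)_M` of triads with roots in `G`, fixing the triads in `K`. Triads are encoded as in
`Htriads`: major, minor, then augmented. -/
def wechsel (t : G) : G ⊕ G ⊕ K → G ⊕ G ⊕ K
  | .inl n => .inr (.inl (n + t))
  | .inr (.inl n) => .inl (n - t)
  | .inr (.inr k) => .inr (.inr k)

theorem wechsel_eq_iff (t : G) (x y : G ⊕ G ⊕ K) :
    wechsel t x = y ↔
      (∃ n, x = .inl n ∧ y = .inr (.inl (n + t))) ∨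
      (∃ n, x = .inr (.inl (n + t)) ∧ y = .inl n) ∨
      (∃ k, x = .inr (.inr k) ∧ y = .inr (.inr k)) := by
  rcases x with n | n | k
  · simp [wechsel, eq_comm]
  · simp [wechsel, ← sub_eq_iff_eq_add, eq_comm]
  · simp [wechsel, eq_comm]

theorem wechsel_wechsel_wechsel (s t : G) (x : G ⊕ G ⊕ K) :
    wechsel s (wechsel t (wechsel s x)) = wechsel (s - t + s) x := by
  rcases x with n | n | k
  · simp only [wechsel, sub_eq_add_neg, add_assoc]
  · simp only [wechsel, sub_eq_add_neg, neg_add_rev, neg_neg, add_assoc]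
  · rfl

end Wechsel

/-- The graph of a self-map of the set of triads, as an element of the monoid of relations. -/
def graphRel (f : Htriads → Htriads) : MRel := fun x y => f x = y

theorem graphRel_mul (f g : Htriads → Htriads) : graphRel f * graphRel g = graphRel (g ∘ f) :=
  Relation.fun_eq_comp f

theorem graphRel_wechsel_braid {s t : ZMod 12} (h : s - t + s = t - s + t) :
    graphRel (wechsel s) * graphRel (wechsel t) * graphRel (wechsel s) =
      graphRel (wechsel t) * graphRel (wechsel s) * graphRel (wechsel t) := by
  simp only [graphRel_mul]
  congr 1
  funext x
  simp only [Function.comp_apply, wechsel_wechsel_wechsel, h]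

theorem Lrel_eq_graphRel_wechsel : Lrel = graphRel (wechsel 4) := by
  funext x y
  exact propext (wechsel_eq_iff 4 x y).symm

theorem Prel_eq_graphRel_wechsel : Prel = graphRel (wechsel 0) := by
  funext x y
  simp only [graphRel, wechsel_eq_iff, add_zero]
  rfl

/-- `L ∘ P ∘ L = P ∘ L ∘ P`. -/
theorem stmt2 : Lrel * Prel * Lrel = Prel * Lrel * Prel := by
  rw [Lrel_eq_graphRel_wechsel, Prel_eq_graphRel_wechsel]
  exact graphRel_wechsel_braid (by decide)
end

section
/- Let U and P be the parsimonious relations on the 28-element set H of major, minor, and augmented triads. In the monoid of binary relations on H under relational composition, U²·P·U² = P·U²·P·U²·P (products of relations written as words, with U² = U·U). -/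
/-
Sort the triads into eight classes: each augmented triad alone, and, for each of them, the six
major and minor triads adjacent to it under `U`. Then `U²` is the equivalence relation with these
classes. Index the six-element classes by `ℤ/4`: `P` sends the three major triads of class `k` to
class `k - 1` and the three minor ones to class `k + 1`. Hence `r = U²·P·U²` relates two major or
minor triads exactly when their indices have odd difference, so `r³ ≤ r`, as the sum of three odd
numbers is odd. Since also `P ≤ r` and `P² = 1`, we get `P·r·P ≤ r³ ≤ r` and, conjugating by `P`
once more, `r ≤ P·r·P`.
-/

theorem mul_mul_eq_of_mul_self_eq_one_of_le {M : Type*} [Monoid M] [PartialOrder M]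
    [MulLeftMono M] [MulRightMono M] {p r : M} (hp : p * p = 1) (hpr : p ≤ r)
    (hr : r * r * r ≤ r) : p * r * p = r := by
  have conj_le : p * r * p ≤ r := (mul_le_mul' (mul_le_mul_left hpr r) hpr).trans hr
  refine conj_le.antisymm ?_
  calc r = (p * p) * r * (p * p) := by rw [hp, one_mul, mul_one]
    _ = p * (p * r * p) * p := by simp only [mul_assoc]
    _ ≤ p * r * p := mul_le_mul_left (mul_le_mul_right conj_le p) p

instance : MulLeftMono MRel :=
  ⟨fun _ _ _ h _ z ⟨y, hxy, hyz⟩ => ⟨y, hxy, h y z hyz⟩⟩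

instance : MulRightMono MRel :=
  ⟨fun _ _ _ h x _ ⟨y, hxy, hyz⟩ => ⟨y, h x y hxy, hyz⟩⟩

theorem MRel.mul_apply (r s : MRel) (x z : Htriads) : (r * s) x z ↔ ∃ y, r x y ∧ s y z :=
  Iff.rfl

theorem m4_add_three (n : ZMod 12) : m4 (n + 3) = m4 n + 3 :=
  map_add (ZMod.castHom (by norm_num) (ZMod 4)) n 3

theorem m4_surjective : Function.Surjective m4 :=
  ZMod.ringHom_surjective _

/-- The Weitzmann class of a triad. The class `Sum.inl k` is the Weitzmann region of `k_aug`, the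
six major and minor triads adjacent to it under `U`; the class `Sum.inr k` is `{k_aug}`. -/
def weitzmannClass : Htriads → ZMod 4 ⊕ ZMod 4
  | Sum.inl n => Sum.inl (m4 n)
  | Sum.inr (Sum.inl n) => Sum.inl (m4 (n + 3))
  | Sum.inr (Sum.inr k) => Sum.inr k

theorem weitzmannClass_surjective : Function.Surjective weitzmannClass
  | Sum.inl k => by
    obtain ⟨n, rfl⟩ := m4_surjective k
    exact ⟨maj n, rfl⟩
  | Sum.inr k => ⟨aug k, rfl⟩

theorem urel_iff (x y : Htriads) :
    Urel x y ↔ weitzmannClass y = (weitzmannClass x).swap := by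
  rcases x with n | n | k <;> rcases y with m | m | l <;>
    simp [Urel, maj, mino, aug, weitzmannClass, eq_comm]

theorem urel_sq_iff (x z : Htriads) :
    (Urel ^ 2) x z ↔ weitzmannClass x = weitzmannClass z := by
  simp only [pow_two, MRel.mul_apply, urel_iff]
  constructor
  · rintro ⟨y, hxy, hyz⟩
    rw [hyz, hxy, Sum.swap_swap]
  · intro h
    obtain ⟨y, hy⟩ := weitzmannClass_surjective (weitzmannClass x).swap
    exact ⟨y, hy, by rw [hy, Sum.swap_swap, h]⟩

/-- The parallel involution, exchanging `n_M` and `n_m` and fixing the augmented triads; its graph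
is the relation `P`. -/
def parallel : Htriads → Htriads
  | Sum.inl n => mino n
  | Sum.inr (Sum.inl n) => maj n
  | Sum.inr (Sum.inr k) => aug k

theorem parallel_involutive : Function.Involutive parallel := by
  rintro (n | n | k) <;> rfl

theorem prel_iff (x y : Htriads) : Prel x y ↔ parallel x = y := by
  rcases x with n | n | k <;> rcases y with m | m | l <;>
    simp [Prel, maj, mino, aug, parallel, eq_comm]

theorem prel_mul_prel : Prel * Prel = 1 := by
  funext x z
  apply propext
  simp only [MRel.mul_apply, prel_iff, exists_eq_left', parallel_involutive x]
  rfl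

/-- The relation induced by `P` on Weitzmann classes: the indices of two regions differ by an odd
element of `ℤ/4`, that is, by `±1`, and the classes of the augmented triads are preserved. -/
def OddStep : ZMod 4 ⊕ ZMod 4 → ZMod 4 ⊕ ZMod 4 → Prop :=
  Sum.LiftRel (fun k l => Odd (l - k)) Eq

theorem OddStep.comp_comp {a b c d : ZMod 4 ⊕ ZMod 4} (hab : OddStep a b) (hbc : OddStep b c)
    (hcd : OddStep c d) : OddStep a d := by
  rcases hab with ⟨hab⟩ | ⟨rfl⟩ <;> rcases hbc with ⟨hbc⟩ | ⟨rfl⟩ <;> rcases hcd with ⟨hcd⟩ | ⟨rfl⟩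
  · refine .inl ?_
    simpa only [sub_add_sub_cancel] using (hcd.add_odd hbc).add_odd hab
  · exact .inr rfl

theorem odd_zmod_four_iff : ∀ d : ZMod 4, Odd d ↔ d = 3 ∨ d = -3 := by
  unfold Odd
  decide

theorem oddStep_weitzmannClass_parallel (x : Htriads) :
    OddStep (weitzmannClass x) (weitzmannClass (parallel x)) := by
  rcases x with n | n | k
  · exact .inl ((odd_zmod_four_iff _).2 (.inl (by rw [m4_add_three]; ring)))
  · exact .inl ((odd_zmod_four_iff _).2 (.inr (by rw [m4_add_three]; ring)))
  · exact .inr rfl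

theorem OddStep.exists_parallel {a b : ZMod 4 ⊕ ZMod 4} (h : OddStep a b) :
    ∃ y, weitzmannClass y = a ∧ weitzmannClass (parallel y) = b := by
  rcases h with @⟨k, l, hkl⟩ | @⟨k, _, rfl⟩
  · rcases (odd_zmod_four_iff _).1 hkl with hsub | hsub
    · obtain ⟨n, rfl⟩ := m4_surjective k
      refine ⟨maj n, rfl, congrArg Sum.inl ?_⟩
      rw [m4_add_three, ← hsub, add_sub_cancel]
    · obtain ⟨n, rfl⟩ := m4_surjective l
      refine ⟨mino n, congrArg Sum.inl ?_, rfl⟩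
      rw [m4_add_three, ← neg_eq_iff_eq_neg.2 hsub, neg_sub, add_sub_cancel]
  · exact ⟨aug k, rfl, rfl⟩

theorem urel_sq_mul_prel_mul_urel_sq_iff (x z : Htriads) :
    (Urel ^ 2 * Prel * Urel ^ 2) x z ↔ OddStep (weitzmannClass x) (weitzmannClass z) := by
  simp only [MRel.mul_apply, urel_sq_iff, prel_iff]
  constructor
  · rintro ⟨_, ⟨y, hxy, rfl⟩, hyz⟩
    rw [hxy, ← hyz]
    exact oddStep_weitzmannClass_parallel y
  · intro h
    obtain ⟨y, hyx, hyz⟩ := h.exists_parallel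
    exact ⟨parallel y, ⟨y, hyx.symm, rfl⟩, hyz⟩

/-- `U²·P·U² = P·U²·P·U²·P`. -/
theorem stmt4 :
    Urel ^ 2 * Prel * Urel ^ 2 = Prel * Urel ^ 2 * Prel * Urel ^ 2 * Prel := by
  set r := Urel ^ 2 * Prel * Urel ^ 2 with hr
  have prel_le : Prel ≤ r := by
    intro x y hxy
    rw [hr, urel_sq_mul_prel_mul_urel_sq_iff, ← (prel_iff x y).1 hxy]
    exact oddStep_weitzmannClass_parallel x
  have cube_le : r * r * r ≤ r := by
    rintro w z ⟨y, ⟨x, hwx, hxy⟩, hyz⟩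
    rw [hr, urel_sq_mul_prel_mul_urel_sq_iff] at hwx hxy hyz ⊢
    exact hwx.comp_comp hxy hyz
  calc r = Prel * r * Prel :=
        (mul_mul_eq_of_mul_self_eq_one_of_le prel_mul_prel prel_le cube_le).symm
    _ = Prel * Urel ^ 2 * Prel * Urel ^ 2 * Prel := by simp only [hr, mul_assoc]
end

section
/- Let U, P, L be the parsimonious relations on the 28-element set H of major, minor, and augmented triads. The submonoid M_UPL of the monoid of binary relations on H generated by {U, P, L} contains exactly 40 elements. -/
/-!
The relations `P` and `L` generate a group of order 6. Composing with `U` on either side erases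
the difference between `P` and `L`, so an element outside this group is a word in `U` and `P`.
Since `U` exchanges the augmented triads with the other ones, such a word is governed by what it
does on each side separately, and two commuting words `Y = UPU` and `Z = U²PU²` keep track of the
two sides: `U` intertwines them, and `Z² = PZ = ZP`. This puts every word into one of the forms
`Pᵃ(PL)ᵇ`, `PᵃZⁱYʲUPᶜ`, `PᵃYʲU²Pᶜ`, `PᵃZYʲ`, with `2·3 + 2⁴ + 2·3·2 + 2·3 = 40` exponent
patterns, and the elements obtained are told apart by the triads they relate to `0_M` and `0_aug`.
-/

section Presentation

variable {M : Type*} [Monoid M] {u p l : M}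

/-- The word `UPU`. On augmented triads it moves the class in `ℤ/4` by `±1`; on major and minor
triads it agrees with `U²`. -/
def augShift (u p : M) : M := u * p * u

/-- The word `U²PU²`. On augmented triads it is the identity; on major and minor triads it moves
the augmented triad to which `U` relates them by `±1`. -/
def triadShift (u p : M) : M := u * u * p * (u * u)

/-- The relations between `U`, `P` and `L` from which the normal forms of `M_UPL` are derived. -/
structure UPLRelations (u p l : M) : Prop where
  p_mul_p : p * p = 1
  l_mul_l : l * l = 1
  p_mul_l_pow_three : (p * l) ^ 3 = 1
  l_mul_u : l * u = p * u
  u_mul_l : u * l = u * p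
  u_pow_three : u * (u * u) = u
  p_mul_triadShift : p * triadShift u p = triadShift u p * triadShift u p
  triadShift_mul_p : triadShift u p * p = triadShift u p * triadShift u p
  commute_triadShift_augShift : Commute (triadShift u p) (augShift u p)

/-- The word `PᵃZⁱYʲUw`, for `Y = UPU` and `Z = U²PU²`. -/
def shiftWord (u p : M) (a i j : ℕ) (w : M) : M :=
  p ^ a * (triadShift u p ^ i * augShift u p ^ j * (u * w))

/-- The exponent patterns of the four families of normal forms of words in `U`, `P` and `L`; see
`normalForm`. -/
abbrev NormalFormIndex : Type :=
  (Fin 2 × Fin 3) ⊕ (Fin 2 × Fin 2 × Fin 2 × Fin 2) ⊕ (Fin 2 × Fin 3 × Fin 2) ⊕ (Fin 2 × Fin 3)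

/-- The normal forms `Pᵃ(PL)ᵇ`, `PᵃZⁱYʲUPᶜ`, `PᵃYʲU²Pᶜ` and `PᵃZYʲU²` of words in `U`, `P`
and `L`. The factor `U²` of the last family is redundant; it makes that family an instance of
`shiftWord`. -/
def normalForm (u p l : M) : NormalFormIndex → M
  | .inl (a, b) => p ^ (a : ℕ) * (p * l) ^ (b : ℕ)
  | .inr (.inl (a, i, j, c)) => shiftWord u p a i j (p ^ (c : ℕ))
  | .inr (.inr (.inl (a, j, c))) => shiftWord u p a 0 j (u * p ^ (c : ℕ))
  | .inr (.inr (.inr (a, j))) => shiftWord u p a 1 j u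

theorem map_normalForm {N : Type*} [Monoid N] (f : M →* N) (u p l : M) (t : NormalFormIndex) :
    f (normalForm u p l t) = normalForm (f u) (f p) (f l) t := by
  rcases t with ⟨a, b⟩ | ⟨a, i, j, c⟩ | ⟨a, j, c⟩ | ⟨a, j⟩ <;>
    simp only [normalForm, shiftWord, triadShift, augShift, map_mul, map_pow]

theorem normalForm_mem {S : Submonoid M} (hu : u ∈ S) (hp : p ∈ S) (hl : l ∈ S)
    (t : NormalFormIndex) : normalForm u p l t ∈ S := by
  lift u to S using hu
  lift p to S using hp
  lift l to S using hl
  exact map_normalForm S.subtype u p l t ▸ (normalForm u p l t).2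

namespace UPLRelations

theorem p_mul_p_pow (h : UPLRelations u p l) (a : Fin 2) :
    p * p ^ (a : ℕ) = p ^ ((a + 1 : Fin 2) : ℕ) := by
  fin_cases a <;> simp [h.p_mul_p]

theorem p_mul_l_mul_pow (h : UPLRelations u p l) (b : Fin 3) :
    p * l * (p * l) ^ (b : ℕ) = (p * l) ^ ((b + 1 : Fin 3) : ℕ) := by
  rw [← pow_succ']
  fin_cases b <;> simp [h.p_mul_l_pow_three]

theorem p_mul_l_mul_p_mul_l (h : UPLRelations u p l) : p * l * (p * l) = l * p := by
  have inverse : l * p * (p * l) = 1 := by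
    rw [mul_assoc, ← mul_assoc p, h.p_mul_p, one_mul, h.l_mul_l]
  calc p * l * (p * l) = l * p * (p * l) * (p * l * (p * l)) := by rw [inverse, one_mul]
    _ = l * p * (p * l) ^ 3 := by simp only [pow_succ, pow_zero, one_mul, mul_assoc]
    _ = l * p := by rw [h.p_mul_l_pow_three, mul_one]

theorem u_mul_p_pow_mul_pow (h : UPLRelations u p l) (a : Fin 2) (b : ℕ) :
    u * (p ^ (a : ℕ) * (p * l) ^ b) = u * p ^ (a : ℕ) := by
  have u_mul_p_mul_l : u * (p * l) = u := by
    rw [← mul_assoc, ← h.u_mul_l, mul_assoc, h.l_mul_l, mul_one]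
  have p_mul_p_mul_l : p * (p * l) = l := by rw [← mul_assoc, h.p_mul_p, one_mul]
  induction b with
  | zero => rw [pow_zero, mul_one]
  | succ b ih =>
    rw [pow_succ, ← mul_assoc, ← mul_assoc, mul_assoc u, ih, mul_assoc]
    fin_cases a
    · simpa using u_mul_p_mul_l
    · simpa [p_mul_p_mul_l] using h.u_mul_l

theorem u_mul_u_mul_u_mul (h : UPLRelations u p l) (w : M) : u * (u * (u * w)) = u * w := by
  rw [← mul_assoc u u w, ← mul_assoc, h.u_pow_three]

theorem u_mul_triadShift (h : UPLRelations u p l) :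
    u * triadShift u p = augShift u p * u := by
  simp only [triadShift, augShift, mul_assoc, h.u_mul_u_mul_u_mul]

theorem u_mul_augShift (h : UPLRelations u p l) :
    u * augShift u p = triadShift u p * u := by
  simp only [triadShift, augShift, mul_assoc, h.u_pow_three]

theorem u_mul_shifts (h : UPLRelations u p l) (i j : ℕ) :
    u * (triadShift u p ^ i * augShift u p ^ j) =
      triadShift u p ^ j * augShift u p ^ i * u := by
  have semiconj_triad : SemiconjBy u (triadShift u p) (augShift u p) := h.u_mul_triadShift
  have semiconj_aug : SemiconjBy u (augShift u p) (triadShift u p) := h.u_mul_augShift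
  rw [((semiconj_triad.pow_right i).mul_right (semiconj_aug.pow_right j)).eq,
    (h.commute_triadShift_augShift.pow_pow j i).eq]

theorem triadShift_mul_augShift_pow_mul_p (h : UPLRelations u p l) (j : ℕ) :
    triadShift u p * augShift u p ^ j * p = p * (triadShift u p * augShift u p ^ j) := by
  have commute := h.commute_triadShift_augShift.pow_right j
  calc triadShift u p * augShift u p ^ j * p
      = augShift u p ^ j * (triadShift u p * triadShift u p) := by
        rw [commute.eq, mul_assoc, h.triadShift_mul_p]
    _ = p * triadShift u p * augShift u p ^ j := by
        rw [← (commute.mul_left commute).eq, h.p_mul_triadShift]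
    _ = p * (triadShift u p * augShift u p ^ j) := mul_assoc _ _ _

theorem triadShift_mul_augShift_pow_mul_u_mul_u (h : UPLRelations u p l) (j : ℕ) :
    triadShift u p * augShift u p ^ j * (u * u) = triadShift u p * augShift u p ^ j := by
  have triadShift_mul_u_mul_u : triadShift u p * (u * u) = triadShift u p := by
    simp only [triadShift, mul_assoc, h.u_pow_three]
  rw [(h.commute_triadShift_augShift.pow_right j).eq, mul_assoc, triadShift_mul_u_mul_u]

theorem augShift_sq_mul_u (h : UPLRelations u p l) :
    augShift u p ^ 2 * u = augShift u p * (u * p) := by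
  have semiconj : SemiconjBy u (triadShift u p) (augShift u p) := h.u_mul_triadShift
  calc augShift u p ^ 2 * u = u * (triadShift u p * triadShift u p) := by
        rw [← (semiconj.pow_right 2).eq, sq]
    _ = u * triadShift u p * p := by rw [← h.triadShift_mul_p, mul_assoc]
    _ = augShift u p * (u * p) := by rw [h.u_mul_triadShift, mul_assoc]

theorem shiftWord_u_mul_u_mul (h : UPLRelations u p l) (a i j : ℕ) (w : M) :
    shiftWord u p a i j (u * (u * w)) = shiftWord u p a i j w := by
  rw [shiftWord, h.u_mul_u_mul_u_mul, shiftWord]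

theorem shiftWord_triadShift_sq (h : UPLRelations u p l) (j : ℕ) (w : M) :
    shiftWord u p 0 2 j w = shiftWord u p 1 1 j w := by
  simp only [shiftWord, sq, ← h.p_mul_triadShift, pow_one, pow_zero, one_mul, mul_assoc]

theorem shiftWord_augShift_sq (h : UPLRelations u p l) (a i : ℕ) (w : M) :
    shiftWord u p a i 2 w = shiftWord u p a i 1 (p * w) := by
  have augShift_sq_mul : augShift u p ^ 2 * (u * w) = augShift u p * (u * (p * w)) := by
    rw [← mul_assoc, h.augShift_sq_mul_u, mul_assoc, mul_assoc]
  simp only [shiftWord, mul_assoc, augShift_sq_mul, pow_one]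

theorem shiftWord_u_mul_p (h : UPLRelations u p l) (j : ℕ) :
    shiftWord u p 0 1 j (u * p) = shiftWord u p 1 1 j u := by
  calc shiftWord u p 0 1 j (u * p) = triadShift u p * augShift u p ^ j * (u * u) * p := by
        simp only [shiftWord, pow_zero, one_mul, pow_one, mul_assoc]
    _ = p * (triadShift u p * augShift u p ^ j) := by
        rw [h.triadShift_mul_augShift_pow_mul_u_mul_u, h.triadShift_mul_augShift_pow_mul_p]
    _ = shiftWord u p 1 1 j u := by
        rw [shiftWord, pow_one, pow_one, h.triadShift_mul_augShift_pow_mul_u_mul_u]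

theorem u_mul_shiftWord_zero (h : UPLRelations u p l) (i j : ℕ) (w : M) :
    u * shiftWord u p 0 i j w = shiftWord u p 0 j i (u * w) := by
  simp only [shiftWord, pow_zero, one_mul]
  rw [← mul_assoc, h.u_mul_shifts, mul_assoc]

theorem u_mul_u_mul_shiftWord_zero (h : UPLRelations u p l) (i j : ℕ) (w : M) :
    u * (u * shiftWord u p 0 i j w) = shiftWord u p 0 i j w := by
  rw [h.u_mul_shiftWord_zero, h.u_mul_shiftWord_zero, h.shiftWord_u_mul_u_mul]

theorem u_mul_shiftWord (h : UPLRelations u p l) (a : Fin 2) (i j : ℕ) (w : M) :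
    u * shiftWord u p a i j w = shiftWord u p 0 j (i + a) (u * w) := by
  fin_cases a
  · exact h.u_mul_shiftWord_zero i j w
  · calc u * shiftWord u p 1 i j w
        = u * (p * (u * (u * shiftWord u p 0 i j w))) := by
          rw [h.u_mul_u_mul_shiftWord_zero]
          simp only [shiftWord, pow_one, pow_zero, one_mul]
      _ = augShift u p * shiftWord u p 0 j i (u * w) := by
          rw [h.u_mul_shiftWord_zero]
          simp only [augShift, mul_assoc]
      _ = shiftWord u p 0 j (i + 1) (u * w) := by
          simp only [shiftWord, pow_zero, one_mul, ← mul_assoc, pow_succ',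
            (h.commute_triadShift_augShift.pow_left j).eq]

theorem p_mul_shiftWord (h : UPLRelations u p l) (a : Fin 2) (i j : ℕ) (w : M) :
    p * shiftWord u p a i j w = shiftWord u p (a + 1 : Fin 2) i j w := by
  rw [shiftWord, ← mul_assoc, h.p_mul_p_pow, shiftWord]

theorem l_mul_shiftWord (h : UPLRelations u p l) (a : Fin 2) (i j : ℕ) (w : M) :
    l * shiftWord u p a i j w = p * shiftWord u p a i j w := by
  have l_mul_zero : l * shiftWord u p 0 i j w = p * shiftWord u p 0 i j w := by
    rw [← h.u_mul_u_mul_shiftWord_zero, ← mul_assoc, h.l_mul_u, mul_assoc]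
  fin_cases a
  · exact l_mul_zero
  · have p_mul_zero : p * shiftWord u p 0 i j w = shiftWord u p 1 i j w :=
      h.p_mul_shiftWord 0 i j w
    calc l * shiftWord u p 1 i j w = l * l * shiftWord u p 0 i j w := by
          rw [← p_mul_zero, ← l_mul_zero, mul_assoc]
      _ = p * shiftWord u p 1 i j w := by
          rw [h.l_mul_l, ← p_mul_zero, ← mul_assoc, h.p_mul_p]

theorem p_mul_normalForm_mem_range (h : UPLRelations u p l) (t : NormalFormIndex) :
    p * normalForm u p l t ∈ Set.range (normalForm u p l) := by
  rcases t with ⟨a, b⟩ | ⟨a, i, j, c⟩ | ⟨a, j, c⟩ | ⟨a, j⟩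
  · exact ⟨.inl (a + 1, b), by rw [normalForm, normalForm, ← mul_assoc, h.p_mul_p_pow]⟩
  · exact ⟨.inr (.inl (a + 1, i, j, c)), (h.p_mul_shiftWord a i j _).symm⟩
  · exact ⟨.inr (.inr (.inl (a + 1, j, c))), (h.p_mul_shiftWord a 0 j _).symm⟩
  · exact ⟨.inr (.inr (.inr (a + 1, j))), (h.p_mul_shiftWord a 1 j _).symm⟩

theorem l_mul_normalForm_mem_range (h : UPLRelations u p l) (t : NormalFormIndex) :
    l * normalForm u p l t ∈ Set.range (normalForm u p l) := by
  rcases t with ⟨a, b⟩ | t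
  · fin_cases a
    · refine ⟨.inl (1, b + 1), ?_⟩
      simp [normalForm, ← h.p_mul_l_mul_pow, ← mul_assoc, h.p_mul_p]
    · refine ⟨.inl (0, b + 1 + 1), ?_⟩
      simp only [normalForm, ← h.p_mul_l_mul_pow]
      rw [← mul_assoc (p * l), h.p_mul_l_mul_p_mul_l]
      simp [mul_assoc]
  · have l_mul_eq : l * normalForm u p l (.inr t) = p * normalForm u p l (.inr t) := by
      rcases t with ⟨a, i, j, c⟩ | ⟨a, j, c⟩ | ⟨a, j⟩ <;> exact h.l_mul_shiftWord a _ _ _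
    exact l_mul_eq ▸ h.p_mul_normalForm_mem_range _

theorem shiftWord_odd_mem_range (h : UPLRelations u p l) (i : Fin 3) (j c : Fin 2) :
    shiftWord u p 0 i j (p ^ (c : ℕ)) ∈ Set.range (normalForm u p l) := by
  fin_cases i
  · exact ⟨.inr (.inl (0, 0, j, c)), rfl⟩
  · exact ⟨.inr (.inl (0, 1, j, c)), rfl⟩
  · exact ⟨.inr (.inl (1, 1, j, c)), (h.shiftWord_triadShift_sq j _).symm⟩

theorem shiftWord_even_mem_range (h : UPLRelations u p l) (i c : Fin 2) (j : Fin 3) :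
    shiftWord u p 0 i j (u * p ^ (c : ℕ)) ∈ Set.range (normalForm u p l) := by
  fin_cases i
  · exact ⟨.inr (.inr (.inl (0, j, c))), rfl⟩
  · fin_cases c
    · exact ⟨.inr (.inr (.inr (0, j))), by simp [normalForm]⟩
    · exact ⟨.inr (.inr (.inr (1, j))), by
        simpa [normalForm] using (h.shiftWord_u_mul_p j).symm⟩

theorem u_mul_normalForm_mem_range (h : UPLRelations u p l) (t : NormalFormIndex) :
    u * normalForm u p l t ∈ Set.range (normalForm u p l) := by
  rcases t with ⟨a, b⟩ | ⟨a, i, j, c⟩ | ⟨a, j, c⟩ | ⟨a, j⟩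
  · exact ⟨.inr (.inl (0, 0, 0, a)), by simp [normalForm, shiftWord, h.u_mul_p_pow_mul_pow]⟩
  · obtain ⟨k, hk⟩ : ∃ k : Fin 3, (k : ℕ) = i + a := ⟨⟨i + a, by lia⟩, rfl⟩
    rw [normalForm, h.u_mul_shiftWord, ← hk]
    exact h.shiftWord_even_mem_range j c k
  · rw [normalForm, h.u_mul_shiftWord, h.shiftWord_u_mul_u_mul, zero_add]
    exact h.shiftWord_odd_mem_range j a c
  · have u_mul_eq : u * shiftWord u p a 1 j u = shiftWord u p 0 j (1 + a) 1 := by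
      rw [h.u_mul_shiftWord, ← h.shiftWord_u_mul_u_mul _ _ _ 1, mul_one]
    rw [normalForm, u_mul_eq]
    fin_cases a
    · simpa using h.shiftWord_odd_mem_range j 1 0
    · suffices shiftWord u p 0 j 2 1 ∈ Set.range (normalForm u p l) from this
      rw [h.shiftWord_augShift_sq, mul_one]
      simpa using h.shiftWord_odd_mem_range j 1 1

theorem closure_eq_range_normalForm (h : UPLRelations u p l) :
    (Submonoid.closure {u, p, l} : Set M) = Set.range (normalForm u p l) := by
  apply Set.Subset.antisymm
  · intro r hr
    induction hr using Submonoid.closure_induction_left with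
    | one => exact ⟨.inl (0, 0), by simp [normalForm]⟩
    | mul_left x hx _ _ ih =>
      obtain ⟨t, rfl⟩ := ih
      rcases hx with rfl | rfl | rfl
      exacts [h.u_mul_normalForm_mem_range t, h.p_mul_normalForm_mem_range t,
        h.l_mul_normalForm_mem_range t]
  · rintro _ ⟨t, rfl⟩
    apply normalForm_mem <;> exact Submonoid.mem_closure_of_mem (by simp)

theorem natCard_closure (h : UPLRelations u p l)
    (h_inj : Function.Injective (normalForm u p l)) :
    Nat.card (Submonoid.closure {u, p, l}) = 40 := by
  calc Nat.card (Submonoid.closure {u, p, l})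
      = Nat.card (Set.range (normalForm u p l)) :=
        Nat.card_congr (Equiv.setCongr h.closure_eq_range_normalForm)
    _ = Nat.card NormalFormIndex := Nat.card_range_of_injective h_inj
    _ = 40 := by simp

end UPLRelations

end Presentation

/-- Multivalued self-maps of `α`: binary relations given by the finite set of successors of each
point. For finite `α` this is a model of the monoid of relations in which equality is decidable. -/
def MultiMap (α : Type*) : Type _ := α → Finset α

namespace MultiMap

variable {α : Type*} [DecidableEq α]

instance : Monoid (MultiMap α) where
  one := fun x => {x}
  mul f g := fun x => (f x).biUnion g
  mul_assoc _ _ _ := funext fun _ => Finset.biUnion_biUnion _ _ _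
  one_mul _ := funext fun _ => Finset.singleton_biUnion
  mul_one _ := funext fun _ => Finset.biUnion_singleton_eq_self

instance [Fintype α] : DecidableEq (MultiMap α) :=
  inferInstanceAs (DecidableEq (α → Finset α))

/-- The relation with given successor sets. -/
def toRel : MultiMap Htriads →* MRel where
  toFun f := fun x y => y ∈ f x
  map_one' := funext₂ fun _ _ => propext (Finset.mem_singleton.trans eq_comm)
  map_mul' _ _ := funext₂ fun _ _ => propext Finset.mem_biUnion

theorem toRel_injective : Function.Injective toRel := fun _ _ h =>
  funext fun x => Finset.ext fun y => iff_of_eq (congrFun₂ h x y)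

end MultiMap

/-- The relation `𝒰` as a multivalued map. -/
def uMap : MultiMap Htriads
  | .inl n => {aug (m4 n)}
  | .inr (.inl n) => {aug (m4 (n + 3))}
  | .inr (.inr k) => ({n | m4 n = k} : Finset _).image maj ∪
      ({n | m4 (n + 3) = k} : Finset _).image mino

/-- The relation `𝒫` as a multivalued map. -/
def pMap : MultiMap Htriads
  | .inl n => {mino n}
  | .inr (.inl n) => {maj n}
  | .inr (.inr k) => {aug k}

/-- The relation `ℒ` as a multivalued map. -/
def lMap : MultiMap Htriads
  | .inl n => {mino (n + 4)}
  | .inr (.inl n) => {maj (n - 4)}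
  | .inr (.inr k) => {aug k}

theorem toRel_uMap : MultiMap.toRel uMap = Urel := by
  ext (n | n | k) (m | m | j) <;>
    simp [MultiMap.toRel, uMap, Urel, maj, mino, aug, eq_comm]

theorem toRel_pMap : MultiMap.toRel pMap = Prel := by
  ext (n | n | k) (m | m | j) <;>
    simp [MultiMap.toRel, pMap, Prel, maj, mino, aug, eq_comm]

theorem toRel_lMap : MultiMap.toRel lMap = Lrel := by
  ext (n | n | k) (m | m | j) <;>
    simp [MultiMap.toRel, lMap, Lrel, maj, mino, aug, eq_comm, ← sub_eq_iff_eq_add]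

theorem uplRelations_multiMap : UPLRelations uMap pMap lMap where
  p_mul_p := by decide +kernel
  l_mul_l := by decide +kernel
  p_mul_l_pow_three := by decide +kernel
  l_mul_u := by decide +kernel
  u_mul_l := by decide +kernel
  u_pow_three := by decide +kernel
  p_mul_triadShift := by decide +kernel
  triadShift_mul_p := by decide +kernel
  commute_triadShift_augShift := by unfold Commute SemiconjBy; decide +kernel

theorem normalForm_multiMap_injective : Function.Injective (normalForm uMap pMap lMap) := by
  have rows_injective : Function.Injective fun t : NormalFormIndex =>
      (normalForm uMap pMap lMap t (maj 0), normalForm uMap pMap lMap t (aug 0)) := by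
    decide +kernel
  exact rows_injective.of_comp (f := fun r : MultiMap Htriads => (r (maj 0), r (aug 0)))

theorem image_toRel_generators :
    MultiMap.toRel '' {uMap, pMap, lMap} = {Urel, Prel, Lrel} := by
  simp only [Set.image_insert_eq, Set.image_singleton, toRel_uMap, toRel_pMap, toRel_lMap]

/-- the submonoid of relations on `Htriads` generated by `{U, P, L}`
contains exactly 40 elements. -/
theorem stmt6 : Nat.card (Submonoid.closure ({Urel, Prel, Lrel} : Set MRel)) = 40 := by
  rw [← image_toRel_generators, ← MonoidHom.map_mclosure]
  calc Nat.card ((Submonoid.closure {uMap, pMap, lMap}).map MultiMap.toRel)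
      = Nat.card (Submonoid.closure {uMap, pMap, lMap}) :=
        Nat.card_congr
          (Submonoid.equivMapOfInjective _ _ MultiMap.toRel_injective).symm.toEquiv
    _ = 40 := uplRelations_multiMap.natCard_closure normalForm_multiMap_injective
end

section
/- Let M_UPL be the submonoid of binary relations on the 28-element set H of major, minor, and augmented triads generated by the parsimonious relations U, P, L. The set of invertible elements (units) of M_UPL is exactly {1, L, P, L·P, P·L, L·P·L}, and this group of units is isomorphic to the dihedral group of order 6 (DihedralGroup 3). -/
/-!
`P` and `L` are distinct involutive permutations of the triads, and `L * P` transposes major triads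
by a major third up and minor triads by a major third down, so it has order 3. Two involutions whose
product has order `n ≠ 1, 2` generate a dihedral group of order `2 * n`, hence `P` and `L` generate
`DihedralGroup 3` inside the monoid of relations. On the other hand `U` sends `0_M` and `4_M` to the
same augmented triad, so `U * R` is never the identity. Reading a word in `U`, `P`, `L` from the
left and cancelling the invertible letters `P` and `L`, one sees that `U` occurs in no word which
represents a unit.
-/

section Monoid

variable {M : Type*} [Monoid M]

theorem mem_closure_of_isUnit_of_mem_closure_union {S T : Set M} (hS : ∀ s ∈ S, IsUnit s)
    (hT : ∀ t ∈ T, ∀ y, t * y ≠ 1) {x : M} (hx : x ∈ Submonoid.closure (T ∪ S))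
    (hu : IsUnit x) : x ∈ Submonoid.closure S := by
  induction hx using Submonoid.closure_induction_left with
  | one => exact one_mem _
  | mul_left g hg y _ ih =>
    rcases hg with hgT | hgS
    · obtain ⟨z, hz⟩ := hu.exists_right_inv
      exact absurd (mul_assoc g y z ▸ hz) (hT g hgT _)
    · obtain ⟨v, rfl⟩ := hS g hgS
      exact mul_mem (Submonoid.subset_closure hgS) (ih ((Units.isUnit_units_mul v y).1 hu))

section GroupImage

variable {G : Type*} [Group G] {φ : G →* M} {N : Submonoid M}

theorem isUnit_of_coe_mem_mrange (hφ : MonoidHom.mrange φ ≤ N) {x : N}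
    (hx : (x : M) ∈ MonoidHom.mrange φ) : IsUnit x := by
  obtain ⟨g, hg⟩ := hx
  have hgx : φ.codRestrict N (fun g => hφ ⟨g, rfl⟩) g = x := Subtype.ext hg
  exact hgx ▸ (Group.isUnit g).map _

theorem nonempty_units_mulEquiv (hinj : Function.Injective φ)
    (hunit : ∀ x : N, IsUnit x → (x : M) ∈ MonoidHom.mrange φ)
    (hφ : MonoidHom.mrange φ ≤ N) : Nonempty (Nˣ ≃* G) := by
  let ψ : G →* Nˣ := (φ.codRestrict N fun g => hφ ⟨g, rfl⟩).toHomUnits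
  have hψ (g : G) : ((ψ g : N) : M) = φ g := rfl
  refine ⟨(MulEquiv.ofBijective ψ ⟨fun g h hgh => hinj ?_, fun u => ?_⟩).symm⟩
  · rw [← hψ, ← hψ, hgh]
  · obtain ⟨g, hg⟩ := hunit u u.isUnit
    exact ⟨g, Units.ext (Subtype.ext hg)⟩

end GroupImage

section Dihedral

open DihedralGroup

variable {n : ℕ}

theorem closure_sr_zero_sr_one :
    Submonoid.closure ({sr 0, sr 1} : Set (DihedralGroup n)) = ⊤ := by
  set D := Submonoid.closure ({sr 0, sr 1} : Set (DihedralGroup n))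
  have h₀ : sr 0 ∈ D := Submonoid.subset_closure (Set.mem_insert _ _)
  have h₁ : sr 1 ∈ D := Submonoid.subset_closure (Set.mem_insert_of_mem _ rfl)
  have hr (i : ZMod n) : r i ∈ D := by
    obtain ⟨k, rfl⟩ := ZMod.intCast_surjective i
    obtain ⟨m, rfl | rfl⟩ := k.eq_nat_or_neg
    · simpa using pow_mem (mul_mem h₀ h₁) m
    · simpa using pow_mem (mul_mem h₁ h₀) m
  refine (Submonoid.eq_top_iff' D).2 ?_
  rintro (i | i)
  · exact hr i
  · simpa using mul_mem h₀ (hr i)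

theorem closure_map_sr_eq_mrange (φ : DihedralGroup n →* M) :
    Submonoid.closure {φ (sr 0), φ (sr 1)} = MonoidHom.mrange φ := by
  rw [← Set.image_pair, ← MonoidHom.map_mclosure, closure_sr_zero_sr_one,
    MonoidHom.mrange_eq_map]

theorem coe_mrange_dihedralGroup_three (φ : DihedralGroup 3 →* M) :
    (MonoidHom.mrange φ : Set M) =
      {1, φ (sr 0), φ (sr 1), φ (sr 0) * φ (sr 1), φ (sr 1) * φ (sr 0),
        φ (sr 0) * φ (sr 1) * φ (sr 0)} := by
  have huniv : (Set.univ : Set (DihedralGroup 3)) =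
      {1, sr 0, sr 1, sr 0 * sr 1, sr 1 * sr 0, sr 0 * sr 1 * sr 0} := by
    refine (Set.eq_univ_of_forall ?_).symm
    simp only [Set.mem_insert_iff, Set.mem_singleton_iff]
    decide
  simp only [MonoidHom.coe_mrange, ← Set.image_univ, huniv, Set.image_insert_eq,
    Set.image_singleton, map_one, map_mul]

theorem injective_of_map_r_eq_one (hn₁ : n ≠ 1) (hn₂ : n ≠ 2) (φ : DihedralGroup n →* M)
    (hφ : ∀ i, φ (r i) = 1 → i = 0) : Function.Injective φ := by
  rw [injective_iff_map_eq_one]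
  rintro (i | i) hi
  · rw [hφ i hi, r_zero]
  · have hr₂ : φ (r 2) = 1 := by
      have hconj : r 2 = r 1 * sr i * (r 1)⁻¹ * sr i := by
        simp only [r_mul_sr, inv_r, sr_mul_r, sr_mul_sr, r.injEq]
        ring
      rw [hconj, map_mul, hi, mul_one, map_mul, map_mul, hi, mul_one, ← map_mul, mul_inv_cancel,
        map_one]
    have hdvd : n ∣ 2 := (ZMod.natCast_eq_zero_iff 2 n).1 (by exact_mod_cast hφ 2 hr₂)
    rcases (Nat.dvd_prime Nat.prime_two).1 hdvd with h | h <;> contradiction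

variable {G : Type*} [Group G] {a b : G}

/-- The homomorphism `i ↦ c ^ i` from the cyclic group `ZMod n` to `G`, for `c` with
`c ^ n = 1`. -/
def zmodPowHom (c : G) (hc : c ^ n = 1) : ZMod n →+ Additive G :=
  ZMod.lift n ⟨zmultiplesHom (Additive G) (.ofMul c), by simp [← ofMul_pow, hc]⟩

theorem toMul_zmodPowHom_intCast (c : G) (hc : c ^ n = 1) (k : ℤ) :
    (zmodPowHom c hc k).toMul = c ^ k := by
  simp [zmodPowHom]

theorem toMul_zmodPowHom_mul_involution (ha : a * a = 1) (hb : b * b = 1)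
    (hab : (a * b) ^ n = 1) (i : ZMod n) :
    (zmodPowHom (a * b) hab i).toMul * a = a * (zmodPowHom (a * b) hab (-i)).toMul := by
  have hinv : SemiconjBy a (a * b)⁻¹ (a * b) := by
    rw [SemiconjBy, mul_inv_rev, inv_eq_of_mul_eq_one_left ha, inv_eq_of_mul_eq_one_left hb,
      mul_assoc]
  obtain ⟨k, rfl⟩ := ZMod.intCast_surjective i
  rw [← Int.cast_neg, toMul_zmodPowHom_intCast, toMul_zmodPowHom_intCast, zpow_neg, ← inv_zpow]
  exact (hinv.zpow_right k).symm

/-- The universal property of the dihedral group: involutions `a` and `b` with `(a * b) ^ n = 1`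
are the images of the adjacent reflections `sr 0` and `sr 1` under a homomorphism. -/
def dihedralLift (ha : a * a = 1) (hb : b * b = 1) (hab : (a * b) ^ n = 1) :
    DihedralGroup n →* G where
  toFun
    | r i => (zmodPowHom (a * b) hab i).toMul
    | sr i => a * (zmodPowHom (a * b) hab i).toMul
  map_one' := by simp only [one_def, map_zero, toMul_zero]
  map_mul' := by
    have hcomm := toMul_zmodPowHom_mul_involution ha hb hab
    have hadd (i j : ZMod n) : (zmodPowHom (a * b) hab (i + j)).toMul =
        (zmodPowHom (a * b) hab i).toMul * (zmodPowHom (a * b) hab j).toMul := by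
      rw [map_add, toMul_add]
    rintro (i | i) (j | j)
    · exact hadd i j
    · simp only [r_mul_sr, sub_eq_neg_add, hadd, ← mul_assoc, hcomm]
    · simp only [sr_mul_r, hadd, mul_assoc]
    · simp only [sr_mul_sr, sub_eq_neg_add, hadd, mul_assoc]
      rw [← mul_assoc _ a, hcomm, ← mul_assoc, ← mul_assoc, ha, one_mul]

variable (ha : a * a = 1) (hb : b * b = 1)

theorem dihedralLift_sr_zero (hab : (a * b) ^ n = 1) :
    dihedralLift ha hb hab (sr 0) = a := by
  simp [dihedralLift]

theorem dihedralLift_r_intCast (hab : (a * b) ^ n = 1) (k : ℤ) :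
    dihedralLift ha hb hab (r k) = (a * b) ^ k :=
  toMul_zmodPowHom_intCast _ hab k

theorem dihedralLift_sr_one (hab : (a * b) ^ n = 1) :
    dihedralLift ha hb hab (sr 1) = b := by
  have hsr : (sr 1 : DihedralGroup n) = sr 0 * r (1 : ℤ) := by simp
  rw [hsr, map_mul, dihedralLift_sr_zero, dihedralLift_r_intCast, zpow_one, ← mul_assoc, ha,
    one_mul]

theorem dihedralLift_injective (hn₁ : n ≠ 1) (hn₂ : n ≠ 2) (hab : orderOf (a * b) = n) :
    Function.Injective (dihedralLift ha hb (orderOf_dvd_iff_pow_eq_one.1 hab.dvd)) := by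
  refine injective_of_map_r_eq_one hn₁ hn₂ _ fun i hi => ?_
  obtain ⟨k, rfl⟩ := ZMod.intCast_surjective i
  rw [dihedralLift_r_intCast, ← orderOf_dvd_iff_zpow_eq_one, hab] at hi
  exact (ZMod.intCast_zmod_eq_zero_iff_dvd k n).2 hi

end Dihedral

end Monoid

section TriadRelations

theorem mul_ne_one_of_forall_imp {R : MRel} {x x' : Htriads} (hne : x ≠ x')
    (h : ∀ y, R x y → R x' y) (R' : MRel) : R * R' ≠ 1 := by
  intro hRR'
  obtain ⟨y, hxy, hyx⟩ : (R * R') x x := hRR' ▸ rfl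
  have hx'x : (R * R') x' x := ⟨y, h y hxy, hyx⟩
  rw [hRR'] at hx'x
  exact hne (Eq.symm hx'x)

theorem Urel_maj_iff (n : ZMod 12) (y : Htriads) : Urel (maj n) y ↔ y = aug (m4 n) := by
  simp [Urel, maj, mino, aug]

theorem Urel_mul_ne_one (R : MRel) : Urel * R ≠ 1 := by
  have hm4 : m4 0 = m4 4 := by decide
  refine mul_ne_one_of_forall_imp (x := maj 0) (x' := maj 4) (by decide) (fun y => ?_) R
  rw [Urel_maj_iff, Urel_maj_iff, hm4]
  exact id

/-- A permutation as a binary relation, relating `f y` to `y`. It is the converse of the graph,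
because relations compose from left to right and permutations from right to left. -/
def permRel : Equiv.Perm Htriads →* MRel where
  toFun f x y := x = f y
  map_one' := rfl
  map_mul' f g := by
    funext x z
    refine propext ⟨fun h => ⟨g z, h, rfl⟩, ?_⟩
    rintro ⟨_, hx, rfl⟩
    exact hx

theorem permRel_injective : Function.Injective permRel := fun f g hfg =>
  Equiv.ext fun y => (show permRel g (f y) y from hfg ▸ rfl)

/-- The mode-reversing involution exchanging `n_M` with `(n + k)_m` and fixing the augmented
triads; `P` and `L` are the cases `k = 0` and `k = 4`. -/
def exchange (k : ZMod 12) : Equiv.Perm Htriads :=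
  Function.Involutive.toPerm
    (fun
      | .inl n => mino (n + k)
      | .inr (.inl n) => maj (n - k)
      | .inr (.inr j) => aug j)
    (by rintro (n | n | j) <;> simp [maj, mino, aug])

theorem exchange_maj (k n : ZMod 12) : exchange k (maj n) = mino (n + k) := rfl

theorem exchange_mino (k n : ZMod 12) : exchange k (mino n) = maj (n - k) := rfl

theorem exchange_aug (k : ZMod 12) (j : ZMod 4) : exchange k (aug j) = aug j := rfl

theorem exchange_mul_self (k : ZMod 12) : exchange k * exchange k = 1 :=
  Equiv.ext (Function.Involutive.toPerm_involutive _)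

theorem exchange_mul_exchange_pow_maj (k l n : ZMod 12) (m : ℕ) :
    ((exchange k * exchange l) ^ m) (maj n) = maj (n + m • (l - k)) := by
  induction m with
  | zero => simp
  | succ m ih =>
    rw [pow_succ', Equiv.Perm.mul_apply, ih, Equiv.Perm.mul_apply, exchange_maj, exchange_mino,
      succ_nsmul]
    congr 1
    ring

theorem exchange_mul_exchange_pow_mino (k l n : ZMod 12) (m : ℕ) :
    ((exchange k * exchange l) ^ m) (mino n) = mino (n + m • (k - l)) := by
  induction m with
  | zero => simp
  | succ m ih =>
    rw [pow_succ', Equiv.Perm.mul_apply, ih, Equiv.Perm.mul_apply, exchange_mino, exchange_maj,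
      succ_nsmul]
    congr 1
    ring

theorem exchange_mul_exchange_pow_aug (k l : ZMod 12) (j : ZMod 4) (m : ℕ) :
    ((exchange k * exchange l) ^ m) (aug j) = aug j := by
  induction m with
  | zero => rfl
  | succ m ih =>
    rw [pow_succ', Equiv.Perm.mul_apply, ih, Equiv.Perm.mul_apply, exchange_aug, exchange_aug]

theorem orderOf_exchange_mul_exchange (k l : ZMod 12) :
    orderOf (exchange k * exchange l) = addOrderOf (k - l) := by
  rw [← orderOf_ofAdd_eq_addOrderOf, orderOf_eq_orderOf_iff]
  intro m
  rw [← ofAdd_nsmul, ofAdd_eq_one]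
  refine ⟨fun h => ?_, fun h => Equiv.ext ?_⟩
  · have hfix := exchange_mul_exchange_pow_mino k l 0 m
    rw [h, zero_add] at hfix
    exact (Sum.inl.inj (Sum.inr.inj hfix)).symm
  · have h' : m • (l - k) = 0 := by rw [← neg_sub, smul_neg, h, neg_zero]
    rintro (n | n | j)
    · exact (exchange_mul_exchange_pow_maj k l n m).trans (by rw [h', add_zero]; rfl)
    · exact (exchange_mul_exchange_pow_mino k l n m).trans (by rw [h, add_zero]; rfl)
    · exact exchange_mul_exchange_pow_aug k l j m

theorem permRel_exchange_iff (k : ZMod 12) (x y : Htriads) :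
    permRel (exchange k) x y ↔
      (∃ n, x = maj n ∧ y = mino (n + k)) ∨ (∃ n, x = mino (n + k) ∧ y = maj n) ∨
        ∃ j, x = aug j ∧ y = aug j := by
  change x = exchange k y ↔ _
  rcases y with n | n | j <;> simp [exchange, maj, mino, aug, eq_comm, ← sub_eq_iff_eq_add]

theorem permRel_exchange_zero : permRel (exchange 0) = Prel := by
  funext x y
  simp only [permRel_exchange_iff, add_zero, Prel]

theorem permRel_exchange_four : permRel (exchange 4) = Lrel := by
  funext x y
  exact propext (permRel_exchange_iff 4 x y)

theorem orderOf_exchange_four_mul_exchange_zero : orderOf (exchange 4 * exchange 0) = 3 := by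
  rw [orderOf_exchange_mul_exchange]
  exact addOrderOf_eq_prime (by decide) (by decide)

/-- The representation of the dihedral group of order 6 by relations on triads which sends the
adjacent reflections `sr 0` and `sr 1` to `L` and `P`. -/
def triadRep : DihedralGroup 3 →* MRel :=
  permRel.comp (dihedralLift (exchange_mul_self 4) (exchange_mul_self 0)
    (orderOf_dvd_iff_pow_eq_one.1 orderOf_exchange_four_mul_exchange_zero.dvd))

theorem triadRep_injective : Function.Injective triadRep :=
  permRel_injective.comp <| dihedralLift_injective _ _ (by decide) (by decide)
    orderOf_exchange_four_mul_exchange_zero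

theorem triadRep_sr_zero : triadRep (.sr 0) = Lrel := by
  rw [triadRep, MonoidHom.comp_apply, dihedralLift_sr_zero, permRel_exchange_four]

theorem triadRep_sr_one : triadRep (.sr 1) = Prel := by
  rw [triadRep, MonoidHom.comp_apply, dihedralLift_sr_one, permRel_exchange_zero]

theorem closure_Prel_Lrel_eq_mrange :
    Submonoid.closure {Prel, Lrel} = MonoidHom.mrange triadRep := by
  rw [← closure_map_sr_eq_mrange, triadRep_sr_zero, triadRep_sr_one, Set.pair_comm]

theorem mrange_triadRep_le_closure :
    MonoidHom.mrange triadRep ≤ Submonoid.closure {Urel, Prel, Lrel} :=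
  closure_Prel_Lrel_eq_mrange ▸ Submonoid.closure_mono (Set.subset_insert _ _)

theorem isUnit_iff_coe_mem_mrange_triadRep
    (x : Submonoid.closure ({Urel, Prel, Lrel} : Set MRel)) :
    IsUnit x ↔ (x : MRel) ∈ MonoidHom.mrange triadRep := by
  refine ⟨fun hx => ?_, isUnit_of_coe_mem_mrange mrange_triadRep_le_closure⟩
  rw [← closure_Prel_Lrel_eq_mrange]
  refine mem_closure_of_isUnit_of_mem_closure_union (T := {Urel}) ?_ ?_ x.2
    (hx.map (Submonoid.subtype _))
  · rintro _ (rfl | rfl)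
    · exact triadRep_sr_one ▸ (Group.isUnit _).map triadRep
    · exact triadRep_sr_zero ▸ (Group.isUnit _).map triadRep
  · rintro _ rfl
    exact Urel_mul_ne_one

end TriadRelations

/-- the units of the submonoid `M_UPL` generated by `{U, P, L}` are exactly
`{1, L, P, L·P, P·L, L·P·L}`, and the group of units is isomorphic to the dihedral group
of order 6. -/
theorem stmt7 :
    (∀ x : (Submonoid.closure ({Urel, Prel, Lrel} : Set MRel)), IsUnit x ↔
      (x : MRel) ∈ ({1, Lrel, Prel, Lrel * Prel, Prel * Lrel, Lrel * Prel * Lrel} : Set MRel)) ∧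
    Nonempty ((Submonoid.closure ({Urel, Prel, Lrel} : Set MRel))ˣ ≃* DihedralGroup 3) := by
  refine ⟨fun x => ?_, nonempty_units_mulEquiv triadRep_injective
    (fun x => (isUnit_iff_coe_mem_mrange_triadRep x).1) mrange_triadRep_le_closure⟩
  rw [isUnit_iff_coe_mem_mrange_triadRep, ← SetLike.mem_coe, coe_mrange_dihedralGroup_three,
    triadRep_sr_zero, triadRep_sr_one]
end

section
/- Let M_UPL be the submonoid of binary relations on the 28-element set H of major, minor, and augmented triads generated by the parsimonious relations U, P, L. The group of monoid automorphisms of M_UPL is isomorphic to the direct product of the dihedral group of order 6 with the cyclic group of order 2, i.e. Aut(M_UPL) ≅ DihedralGroup 3 × ℤ/2. -/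
/-!
The unit group of `M_UPL` is generated by `𝒫` and `ℒ` and is isomorphic to `DihedralGroup 3`, a
complete group. Restricting automorphisms of a monoid to a complete unit group is split by the inner
automorphisms, which commute with the kernel of the restriction, so `Aut M_UPL` is the product of
the unit group and the group of automorphisms fixing every unit. Such an automorphism is determined
by the image of `𝒰`. Every element of `M_UPL` is a unit, or `g𝒰k` or `g𝒰²k` with units `g` and `k`,
or a multiple of `𝒰𝒫𝒰`; since `𝒰³ = 𝒰` and `𝒰` is not a multiple of `𝒰𝒫𝒰`, the image of `𝒰` can only
be `𝒰` or `𝒫𝒰𝒫`. The second value is attained by conjugation with the permutation multiplying the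
roots of the major and minor triads by 7 and sending `k_aug` to `(3 - k)_aug`.

That `𝒰` is not a multiple of `𝒰𝒫𝒰` follows from two tritone transpositions, one of the augmented
triads and one of the other triads: `𝒰` exchanges them, `𝒫` and `ℒ` commute with both, and `𝒰𝒫𝒰` is
invariant under the first, whereas `𝒰` is invariant under neither.
-/

namespace UPL

/-! ### Complete groups -/

section Complete

variable {A B G H : Type*} [Group A] [Group B] [Group G] [Group H]

theorem nonempty_mulEquiv_prod_ker {φ : A →* B} {ι : G →* A}
    (hbij : Function.Bijective (φ.comp ι)) (hcomm : ∀ (g : G) (k : φ.ker), Commute (ι g) k) :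
    Nonempty (A ≃* G × φ.ker) := by
  have hdisj : Disjoint ι.range φ.ker.subtype.range := by
    rw [Subgroup.disjoint_def]
    rintro _ ⟨g, rfl⟩ ⟨k, hk⟩
    have hg : φ.comp ι g = φ.comp ι 1 := by
      rw [map_one, MonoidHom.comp_apply, ← hk]
      exact k.2
    rw [hbij.injective hg, map_one]
  have hinj : Function.Injective (ι.noncommCoprod φ.ker.subtype hcomm) :=
    (MonoidHom.noncommCoprod_injective ..).2
      ⟨hbij.injective.of_comp (f := φ), Subtype.val_injective, hdisj⟩
  have hsurj : Function.Surjective (ι.noncommCoprod φ.ker.subtype hcomm) := fun a => by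
    obtain ⟨g, hg⟩ := hbij.surjective (φ a)
    have hk : (ι g)⁻¹ * a ∈ φ.ker := by
      rw [MonoidHom.mem_ker, map_mul, map_inv, ← hg, MonoidHom.comp_apply, inv_mul_cancel]
    exact ⟨(g, ⟨_, hk⟩), mul_inv_cancel_left _ _⟩
  exact ⟨(MulEquiv.ofBijective _ ⟨hinj, hsurj⟩).symm⟩

theorem injective_conj_of_center_eq_bot (h : Subgroup.center G = ⊥) :
    Function.Injective (MulAut.conj : G →* MulAut G) := by
  rw [injective_iff_map_eq_one]
  intro g hg
  rw [← Subgroup.mem_bot, ← h, Subgroup.mem_center_iff]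
  intro k
  have hk : g * k * g⁻¹ = k := DFunLike.congr_fun hg k
  exact (mul_inv_eq_iff_eq_mul.1 hk).symm

theorem bijective_conj_of_mulEquiv (e : G ≃* H)
    (h : Function.Bijective (MulAut.conj : G →* MulAut G)) :
    Function.Bijective (MulAut.conj : H →* MulAut H) := by
  have hconj : ⇑(MulAut.conj : H →* MulAut H) = MulAut.congr e ∘ MulAut.conj ∘ e.symm := by
    ext x y
    simp [MulAut.congr]
  rw [hconj]
  exact (MulAut.congr e).bijective.comp (h.comp e.symm.bijective)

end Complete

section Dihedral

open DihedralGroup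

theorem closure_sr_zero_sr_one (n : ℕ) [NeZero n] :
    Submonoid.closure ({sr 0, sr 1} : Set (DihedralGroup n)) = ⊤ := by
  have h0 : (sr 0 : DihedralGroup n) ∈ Submonoid.closure {sr 0, sr 1} :=
    Submonoid.subset_closure (by simp)
  have h1 : (sr 1 : DihedralGroup n) ∈ Submonoid.closure {sr 0, sr 1} :=
    Submonoid.subset_closure (by simp)
  have hr (i : ZMod n) : r i ∈ Submonoid.closure ({sr 0, sr 1} : Set (DihedralGroup n)) := by
    have hi : r i = (sr 0 * sr 1) ^ i.val := by simp
    exact hi ▸ pow_mem (mul_mem h0 h1) _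
  refine (Submonoid.eq_top_iff' _).2 ?_
  rintro (i | i)
  · exact hr i
  · have hi : sr i = sr 0 * r i := by simp
    exact hi ▸ mul_mem h0 (hr i)

theorem exists_conj_sr_eq_of_mul_self_eq_one :
    ∀ a b : DihedralGroup 3, a ≠ 1 → b ≠ 1 → a ≠ b → a * a = 1 → b * b = 1 →
      ∃ g, g * sr 0 * g⁻¹ = a ∧ g * sr 1 * g⁻¹ = b := by
  decide

theorem bijective_conj_dihedralGroup_three :
    Function.Bijective (MulAut.conj : DihedralGroup 3 →* MulAut (DihedralGroup 3)) := by
  refine ⟨injective_conj_of_center_eq_bot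
    (center_eq_bot_of_odd_ne_one (by decide) (by decide)), fun f => ?_⟩
  have hne (i : ZMod 3) : f (sr i) ≠ 1 := by
    rw [Ne, map_eq_one_iff f f.injective]
    exact nofun
  have hsq (i : ZMod 3) : f (sr i) * f (sr i) = 1 := by
    rw [← map_mul, sr_mul_self, map_one]
  obtain ⟨g, h0, h1⟩ := exists_conj_sr_eq_of_mul_self_eq_one (f (sr 0)) (f (sr 1)) (hne 0) (hne 1)
    (f.injective.ne (by decide)) (hsq 0) (hsq 1)
  refine ⟨g, MulEquiv.toMonoidHom_injective
    (MonoidHom.eq_of_eqOn_denseM (closure_sr_zero_sr_one 3) ?_)⟩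
  rintro _ (rfl | rfl)
  · exact h0
  · exact h1

end Dihedral

/-! ### Units and automorphisms of a monoid -/

section Units

variable (M : Type*) [Monoid M]

/-- The action of automorphisms of a monoid on its group of units. Its kernel consists of the
automorphisms fixing every unit. -/
def unitsAut : MulAut M →* MulAut Mˣ where
  toFun := Units.mapEquiv
  map_one' := rfl
  map_mul' _ _ := rfl

/-- The inner automorphisms `x ↦ g * x * g⁻¹` of a monoid, for `g` a unit. -/
def innerAut : Mˣ →* MulAut M :=
  (MulDistribMulAction.toMulAut (ConjAct Mˣ) M).comp ConjAct.toConjAct.toMonoidHom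

variable {M}

theorem innerAut_apply (g : Mˣ) (x : M) : innerAut M g x = g * x * ↑g⁻¹ := rfl

theorem mem_ker_unitsAut {f : MulAut M} : f ∈ (unitsAut M).ker ↔ ∀ g : Mˣ, f g = g := by
  simp only [MonoidHom.mem_ker, MulEquiv.ext_iff, Units.ext_iff]
  rfl

theorem unitsAut_comp_innerAut : (unitsAut M).comp (innerAut M) = MulAut.conj := by
  ext g k
  rfl

theorem commute_innerAut_of_mem_ker {f : MulAut M} (hf : f ∈ (unitsAut M).ker) (g : Mˣ) :
    Commute (innerAut M g) f := by
  rw [mem_ker_unitsAut] at hf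
  ext x
  simp only [MulAut.mul_apply, innerAut_apply, map_mul, hf]

theorem nonempty_mulAut_mulEquiv_units_prod_ker
    (h : Function.Bijective (MulAut.conj : Mˣ →* MulAut Mˣ)) :
    Nonempty (MulAut M ≃* Mˣ × (unitsAut M).ker) :=
  nonempty_mulEquiv_prod_ker (by rwa [unitsAut_comp_innerAut])
    fun g f => commute_innerAut_of_mem_ker f.2 g

theorem surjective_units_of_closure_eq_top {G : Type*} [Group G] {ρ : G →* Mˣ} {u : M}
    (hgen : Submonoid.closure (insert u (Set.range fun g => (ρ g : M))) = ⊤)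
    {r : Mˣ} (hr : r ≠ 1) (hru : r * u = u) : Function.Surjective ρ := by
  have hform (x : M) : (∃ g, x = ρ g) ∨ ∃ g b, x = ρ g * u * b := by
    induction hgen ▸ Submonoid.mem_top x using Submonoid.closure_induction_left with
    | one => exact .inl ⟨1, by simp⟩
    | mul_left y hy x _ ih =>
      rcases hy with rfl | ⟨k, rfl⟩
      · exact .inr ⟨1, x, by simp⟩
      · rcases ih with ⟨g, rfl⟩ | ⟨g, b, rfl⟩
        · exact .inl ⟨k * g, by simp⟩
        · exact .inr ⟨k * g, b, by simp [mul_assoc]⟩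
  intro c
  rcases hform c with ⟨g, hg⟩ | ⟨g, b, hc⟩
  · exact ⟨g, Units.ext hg.symm⟩
  · -- `u * b` would be a unit absorbed by `r`.
    have hub : u * b = ↑((ρ g)⁻¹ * c) := by
      rw [Units.val_mul, hc, mul_assoc, Units.inv_mul_cancel_left]
    have hrub : r * ((ρ g)⁻¹ * c) = (ρ g)⁻¹ * c := Units.ext <| by
      rw [Units.val_mul, ← hub, ← mul_assoc, hru]
    exact absurd (mul_eq_right.1 hrub) hr

end Units

section SemiconjBy

variable {M : Type*} [Monoid M]

theorem commute_or_semiconjBy_of_mem_closure {S : Set M} {s t : M}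
    (h : ∀ c ∈ S, Commute c s ∧ Commute c t ∨ SemiconjBy c s t ∧ SemiconjBy c t s)
    {c : M} (hc : c ∈ Submonoid.closure S) :
    Commute c s ∧ Commute c t ∨ SemiconjBy c s t ∧ SemiconjBy c t s := by
  induction hc using Submonoid.closure_induction with
  | mem c hc => exact h c hc
  | one => exact .inl ⟨Commute.one_left s, Commute.one_left t⟩
  | mul c d _ _ ihc ihd =>
    rcases ihc with ⟨hcs, hct⟩ | ⟨hcs, hct⟩ <;> rcases ihd with ⟨hds, hdt⟩ | ⟨hds, hdt⟩
    · exact .inl ⟨hcs.mul_left hds, hct.mul_left hdt⟩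
    · exact .inr ⟨SemiconjBy.mul_left hct hds, SemiconjBy.mul_left hcs hdt⟩
    · exact .inr ⟨hcs.mul_left hds, hct.mul_left hdt⟩
    · exact .inl ⟨hct.mul_left hds, hcs.mul_left hdt⟩

theorem mul_mul_ne_of_commute_or_semiconjBy {a w u s t : M}
    (ha : Commute a s ∧ Commute a t ∨ SemiconjBy a s t ∧ SemiconjBy a t s)
    (hw : s * w = w) (hs : s * u ≠ u) (ht : t * u ≠ u) (b : M) : a * w * b ≠ u := by
  have habsorb {c : M} (hc : SemiconjBy a s c) : c * (a * w * b) = a * w * b := by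
    rw [← mul_assoc, ← mul_assoc, ← hc.eq, mul_assoc a, hw]
  rintro rfl
  rcases ha with ⟨has, -⟩ | ⟨has, -⟩
  · exact hs (habsorb has)
  · exact ht (habsorb has)

end SemiconjBy

section Signed

variable {M : Type*} [Monoid M]

/-- `IsSigned p s` says that every unit acts on `s` either trivially on both sides or like `p` on
both sides, where `p * p = 1`, and that `s` does not lie in the two-sided ideal generated by
`s * p * s`. It captures how the units of the `UPL` monoid act on `𝒰` and `𝒰²`, with `p = 𝒫`. -/
structure IsSigned (p : Mˣ) (s : M) : Prop where
  sq_eq_one : p * p = 1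
  units_mul (g : Mˣ) : g * s = s ∧ s * g = s ∨ g * s = p * s ∧ s * g = s * p
  ne (a b : M) : a * (s * p * s) * b ≠ s

/-- `IsSignedGenerator p u` says that the signed element `u` satisfies `u³ = u` and generates the
monoid together with the units. -/
structure IsSignedGenerator (p : Mˣ) (u : M) : Prop extends IsSigned p u where
  mul_mul_self : u * u * u = u
  closure_eq_top : Submonoid.closure (insert u {x | IsUnit x}) = ⊤

theorem IsSigned.eq_or_eq_of_cube_eq {p : Mˣ} {s : M} (h : IsSigned p s) {g k : Mˣ}
    (hcube : (g * s * k) * (g * s * k) * (g * s * k) = g * s * k) :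
    g * s * k = s ∨ g * s * k = p * s * p := by
  obtain ⟨hg, -⟩ | ⟨hg, -⟩ := h.units_mul g <;> obtain ⟨-, hk⟩ | ⟨-, hk⟩ := h.units_mul k
  · exact .inl (by rw [hg, hk])
  · rw [hg, hk] at hcube
    refine absurd (p.isUnit.mul_left_injective ?_) (h.ne 1 (p * s))
    simpa only [one_mul, mul_assoc] using hcube
  · rw [mul_assoc (g : M), hk, hg] at hcube
    refine absurd (p.isUnit.mul_right_injective ?_) (h.ne 1 (p * s))
    simpa only [one_mul, mul_assoc] using hcube
  · exact .inr (by rw [hg, mul_assoc, hk, mul_assoc])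

namespace IsSignedGenerator

variable {p : Mˣ} {u : M} (h : IsSignedGenerator p u)
include h

theorem not_isUnit : ¬IsUnit u := by
  rintro ⟨v, rfl⟩
  exact h.ne (v * ↑(v * p * v)⁻¹) 1 (by simp [mul_assoc])

theorem mul_mul_ne_self : (p * u * p : M) ≠ u := fun hpup => by
  refine h.ne (u * p) 1 ?_
  calc u * p * (u * p * u) * 1 = u * (p * u * p) * u := by simp only [mul_assoc, mul_one]
    _ = u := by rw [hpup, h.mul_mul_self]

theorem isSigned_mul_self : IsSigned p (u * u) where
  sq_eq_one := h.sq_eq_one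
  units_mul g := by
    rcases h.units_mul g with ⟨hl, hr⟩ | ⟨hl, hr⟩
    · exact .inl ⟨by rw [← mul_assoc, hl], by rw [mul_assoc, hr]⟩
    · exact .inr ⟨by rw [← mul_assoc, hl, mul_assoc], by rw [mul_assoc, hr, mul_assoc]⟩
  ne a b hab := h.ne (u * a * u) (u * b) <| by
    calc u * a * u * (u * p * u) * (u * b) = u * (a * (u * u * p * (u * u)) * b) := by
          simp only [mul_assoc]
      _ = u := by rw [hab, ← mul_assoc, h.mul_mul_self]

theorem normal_form (x : M) :
    IsUnit x ∨ (∃ g k : Mˣ, x = g * u * k) ∨ (∃ g k : Mˣ, x = g * (u * u) * k) ∨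
      ∃ a b, x = a * (u * p * u) * b := by
  induction h.closure_eq_top ▸ Submonoid.mem_top x using Submonoid.closure_induction_right with
  | one => exact .inl isUnit_one
  | mul_right x _ y hy ih =>
    rcases hy with rfl | ⟨v, rfl⟩
    · rcases ih with ⟨g, rfl⟩ | ⟨g, k, rfl⟩ | ⟨g, k, rfl⟩ | ⟨a, b, rfl⟩
      · exact .inr (.inl ⟨g, 1, by simp⟩)
      · rcases h.units_mul k with ⟨hk, -⟩ | ⟨hk, -⟩
        · exact .inr (.inr (.inl ⟨g, 1, by simp [mul_assoc, hk]⟩))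
        · exact .inr (.inr (.inr ⟨g, 1, by simp [mul_assoc, hk]⟩))
      · rcases h.units_mul k with ⟨hk, -⟩ | ⟨hk, -⟩
        · exact .inr (.inl ⟨g, 1, by rw [mul_assoc, hk, mul_assoc, h.mul_mul_self]; simp⟩)
        · exact .inr (.inr (.inr ⟨g * y, 1, by simp [mul_assoc, hk]⟩))
      · exact .inr (.inr (.inr ⟨a, b * y, mul_assoc _ _ _⟩))
    · rcases ih with hx | ⟨g, k, rfl⟩ | ⟨g, k, rfl⟩ | ⟨a, b, rfl⟩
      · exact .inl (hx.mul v.isUnit)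
      · exact .inr (.inl ⟨g, k * v, by simp [mul_assoc]⟩)
      · exact .inr (.inr (.inl ⟨g, k * v, by simp [mul_assoc]⟩))
      · exact .inr (.inr (.inr ⟨a, b * v, mul_assoc _ _ _⟩))

theorem exists_eq_mul_mul_of_not_isUnit {x : M} (hx : ¬IsUnit x) : ∃ a b, x = a * u * b := by
  rcases h.normal_form x with hx' | ⟨g, k, rfl⟩ | ⟨g, k, rfl⟩ | ⟨a, b, rfl⟩
  · exact absurd hx' hx
  · exact ⟨g, k, rfl⟩
  · exact ⟨g * u, k, by simp only [mul_assoc]⟩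
  · exact ⟨a * u * p, b, by simp only [mul_assoc]⟩

theorem mul_mul_ne_map (f : MulAut M) (a b : M) : a * (u * p * u) * b ≠ f u := fun hab => by
  -- The ideal generated by `f u` contains all non-units, hence `u`.
  have hunit : ¬IsUnit (f.symm u) := fun hu => h.not_isUnit <| by
    simpa only [MulEquiv.apply_symm_apply] using hu.map f
  obtain ⟨c, d, hcd⟩ := h.exists_eq_mul_mul_of_not_isUnit hunit
  refine h.ne (f c * a) (b * f d) ?_
  calc f c * a * (u * p * u) * (b * f d) = f c * (a * (u * p * u) * b) * f d := by
        simp only [mul_assoc]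
    _ = u := by rw [hab, ← map_mul, ← map_mul, ← hcd, f.apply_symm_apply]

theorem map_eq_or (f : MulAut M) : f u = u ∨ f u = p * u * p := by
  have hcube : f u * f u * f u = f u := by rw [← map_mul, ← map_mul, h.mul_mul_self]
  rcases h.normal_form (f u) with hu | ⟨g, k, hu⟩ | ⟨g, k, hu⟩ | ⟨a, b, hu⟩
  · exact absurd ((MulEquiv.isUnit_map f).1 hu) h.not_isUnit
  · rw [hu] at hcube ⊢
    exact h.eq_or_eq_of_cube_eq hcube
  · -- Conjugates of `u * u` are idempotent, so in this case `u` is idempotent.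
    have hpp (x : M) : p * (p * x) = x := by
      rw [← mul_assoc, ← Units.val_mul, h.sq_eq_one, Units.val_one, one_mul]
    have huu : (u * u) * (u * u) = u * u := by rw [← mul_assoc, h.mul_mul_self]
    have hidem : f u * f u = f u := by
      rw [hu] at hcube ⊢
      rcases h.isSigned_mul_self.eq_or_eq_of_cube_eq hcube with heq | heq <;> rw [heq]
      · exact huu
      · calc p * (u * u) * p * (p * (u * u) * p) = p * ((u * u) * (u * u)) * p := by
              simp only [mul_assoc, hpp]
          _ = p * (u * u) * p := by rw [huu]
    rw [← map_mul, f.injective.eq_iff] at hidem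
    rw [hu, hidem] at hcube ⊢
    exact h.eq_or_eq_of_cube_eq hcube
  · exact absurd hu.symm (h.mul_mul_ne_map f a b)

theorem aut_ext {f f' : MulAut M} (hf : f ∈ (unitsAut M).ker) (hf' : f' ∈ (unitsAut M).ker)
    (hu : f u = f' u) : f = f' := by
  rw [mem_ker_unitsAut] at hf hf'
  refine MulEquiv.toMonoidHom_injective (MonoidHom.eq_of_eqOn_denseM h.closure_eq_top ?_)
  rintro _ (rfl | ⟨g, rfl⟩)
  · exact hu
  · exact (hf g).trans (hf' g).symm

theorem card_ker_unitsAut {θ : MulAut M} (hθ : θ ∈ (unitsAut M).ker) (hθu : θ u = p * u * p) :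
    Nat.card (unitsAut M).ker = 2 := by
  refine (Nat.card_eq_two_iff' 1).2 ⟨⟨θ, hθ⟩, fun hone => ?_, fun ⟨f, hf⟩ hne => ?_⟩
  · refine h.mul_mul_ne_self (hθu.symm.trans ?_)
    rw [show θ = 1 from congrArg Subtype.val hone, MulAut.one_apply]
  · rcases h.map_eq_or f with hu | hu
    · exact absurd (Subtype.ext (h.aut_ext hf (one_mem _) hu)) hne
    · exact Subtype.ext (h.aut_ext hf hθ (hu.trans hθu.symm))

end IsSignedGenerator

end Signed

/-! ### Relations on triads -/

section Triads

open DihedralGroup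

/-- The graph `{(σ y, y)}` of a permutation of the triads; with this orientation the graph of a
product is the product of the graphs. -/
def permRel : Equiv.Perm Htriads →* MRel where
  toFun σ x y := x = σ y
  map_one' := rfl
  map_mul' σ τ := by
    funext x z
    exact propext ⟨fun h => ⟨τ z, h, rfl⟩, by rintro ⟨_, h, rfl⟩; exact h⟩

theorem permRel_mul_apply (σ : Equiv.Perm Htriads) (r : MRel) (x y : Htriads) :
    (permRel σ * r) x y ↔ r (σ⁻¹ x) y := by
  refine ⟨?_, fun h => ⟨σ⁻¹ x, (Equiv.apply_symm_apply σ x).symm, h⟩⟩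
  rintro ⟨z, rfl, h⟩
  exact (congrArg (r · y) (Equiv.symm_apply_apply σ z)).mpr h

theorem mul_permRel_apply (σ : Equiv.Perm Htriads) (r : MRel) (x y : Htriads) :
    (r * permRel σ) x y ↔ r x (σ y) :=
  ⟨by rintro ⟨_, h, rfl⟩; exact h, fun h => ⟨_, h, rfl⟩⟩

theorem permRel_injective : Function.Injective permRel := fun σ _ h =>
  Equiv.ext fun y => (iff_of_eq (congrFun₂ h (σ y) y)).1 rfl

theorem rel_ext {r s : MRel} (h : ∀ x y, r x y ↔ s x y) : r = s :=
  funext₂ fun x y => propext (h x y)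

/-- A decision procedure for `𝒰` that avoids searching for the witnesses `n` of its definition. -/
def decideUrel : Htriads → Htriads → Bool
  | Sum.inl n, Sum.inr (Sum.inr k) | Sum.inr (Sum.inr k), Sum.inl n => m4 n = k
  | Sum.inr (Sum.inl n), Sum.inr (Sum.inr k) | Sum.inr (Sum.inr k), Sum.inr (Sum.inl n) =>
    m4 (n + 3) = k
  | _, _ => false

theorem decideUrel_iff (x y : Htriads) : decideUrel x y ↔ Urel x y := by
  rcases x with n | n | k <;> rcases y with n' | n' | k' <;>
    simp [decideUrel, Urel, maj, mino, aug, eq_comm]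

instance : DecidableRel Urel := fun x y => decidable_of_iff _ (decideUrel_iff x y)
instance : DecidableRel Prel := fun x y => by unfold Prel; infer_instance
instance : DecidableRel Lrel := fun x y => by unfold Lrel; infer_instance

/-- The action of the dihedral group on the triads that fixes the augmented ones and in which
`sr 0` and `sr 1` act as `𝒫` and `ℒ`. -/
instance : MulAction (DihedralGroup 3) Htriads where
  smul
    | r i, Sum.inl n => maj (n + 4 * i.val)
    | r i, Sum.inr (Sum.inl n) => mino (n - 4 * i.val)
    | sr i, Sum.inl n => mino (n + 4 * i.val)
    | sr i, Sum.inr (Sum.inl n) => maj (n - 4 * i.val)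
    | _, Sum.inr (Sum.inr k) => aug k
  one_smul := by decide +kernel
  mul_smul := by decide +kernel

/-- The permutation of the triads by which an element of the dihedral group acts, as a relation. -/
def dihedralRel : DihedralGroup 3 →* MRel :=
  permRel.comp (MulAction.toPermHom (DihedralGroup 3) Htriads)

theorem dihedralRel_injective : Function.Injective dihedralRel := by
  have hfaithful : ∀ g : DihedralGroup 3, (∀ x : Htriads, g • x = x) → g = 1 := by decide +kernel
  refine permRel_injective.comp ((injective_iff_map_eq_one _).2 fun g hg => hfaithful g fun x => ?_)
  exact Equiv.ext_iff.1 hg x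

theorem dihedralRel_sr_zero : dihedralRel (sr 0) = Prel := by
  have h : ∀ x y : Htriads, x = sr (0 : ZMod 3) • y ↔ Prel x y := by decide +kernel
  exact rel_ext h

theorem dihedralRel_sr_one : dihedralRel (sr 1) = Lrel := by
  have h : ∀ x y : Htriads, x = sr (1 : ZMod 3) • y ↔ Lrel x y := by decide +kernel
  exact rel_ext h

theorem dihedralRel_r_mul_Urel (i : ZMod 3) : dihedralRel (r i) * Urel = Urel := by
  have h : ∀ (i : ZMod 3) (x y : Htriads), Urel ((r i)⁻¹ • x) y ↔ Urel x y := by decide +kernel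
  exact rel_ext fun x y => (permRel_mul_apply _ _ _ _).trans (h i x y)

theorem Urel_mul_dihedralRel_r (i : ZMod 3) : Urel * dihedralRel (r i) = Urel := by
  have h : ∀ (i : ZMod 3) (x y : Htriads), Urel x (r i • y) ↔ Urel x y := by decide +kernel
  exact rel_ext fun x y => (mul_permRel_apply _ _ _ _).trans (h i x y)

theorem dihedralRel_mul_Urel (g : DihedralGroup 3) :
    dihedralRel g * Urel = Urel ∧ Urel * dihedralRel g = Urel ∨
      dihedralRel g * Urel = dihedralRel (sr 0) * Urel ∧
        Urel * dihedralRel g = Urel * dihedralRel (sr 0) := by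
  rcases g with i | i
  · exact .inl ⟨dihedralRel_r_mul_Urel i, Urel_mul_dihedralRel_r i⟩
  · refine .inr ⟨?_, ?_⟩
    · rw [show sr i = sr 0 * r i by simp, map_mul, mul_assoc, dihedralRel_r_mul_Urel]
    · rw [show sr i = r (-i) * sr 0 by simp, map_mul, ← mul_assoc, Urel_mul_dihedralRel_r]

theorem Urel_mul_Urel_mul_Urel : Urel * Urel * Urel = Urel := by
  have hsymm : ∀ x y, Urel x y → Urel y x := by decide +kernel
  have hpath : ∀ x y, Urel x y → ∀ z, Urel y z → ∀ w, Urel z w → Urel x w := by decide +kernel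
  refine rel_ext fun x w => ⟨?_, fun h => ⟨x, ⟨w, h, hsymm x w h⟩, h⟩⟩
  rintro ⟨z, ⟨y, hxy, hyz⟩, hzw⟩
  exact hpath x y hxy z hyz w hzw

/-- The permutation adding a tritone to the major and minor triads and fixing the augmented
ones. -/
def triadTritone : Equiv.Perm Htriads :=
  (Equiv.addRight 6).sumCongr ((Equiv.addRight 6).sumCongr 1)

/-- The permutation adding a tritone to the augmented triads and fixing the other ones. -/
def augTritone : Equiv.Perm Htriads :=
  Equiv.sumCongr 1 (Equiv.sumCongr 1 (Equiv.addRight 2))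

/-- The permutation of the triads whose conjugation fixes `𝒫` and `ℒ` and exchanges `𝒰` with
`𝒫𝒰𝒫`. -/
def twist : Equiv.Perm Htriads :=
  Function.Involutive.toPerm (Sum.map (7 * ·) (Sum.map (7 * ·) (3 - ·))) <| by
    unfold Function.Involutive
    decide +kernel

theorem augTritone_mul_Urel : permRel augTritone * Urel = Urel * permRel triadTritone := by
  have h : ∀ x y, Urel (augTritone⁻¹ x) y ↔ Urel x (triadTritone y) := by decide +kernel
  exact rel_ext fun x y => by rw [permRel_mul_apply, mul_permRel_apply, h]

theorem triadTritone_mul_Urel : permRel triadTritone * Urel = Urel * permRel augTritone := by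
  have h : ∀ x y, Urel (triadTritone⁻¹ x) y ↔ Urel x (augTritone y) := by decide +kernel
  exact rel_ext fun x y => by rw [permRel_mul_apply, mul_permRel_apply, h]

theorem augTritone_mul_Urel_ne : permRel augTritone * Urel ≠ Urel := fun heq => by
  have h := iff_of_eq (congrFun₂ heq (aug 0) (maj 0))
  rw [permRel_mul_apply] at h
  revert h
  decide +kernel

theorem triadTritone_mul_Urel_ne : permRel triadTritone * Urel ≠ Urel := fun heq => by
  have h := iff_of_eq (congrFun₂ heq (maj 0) (aug 0))
  rw [permRel_mul_apply] at h
  revert h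
  decide +kernel

theorem augTritone_mul_Urel_mul_dihedralRel_mul_Urel :
    permRel augTritone * (Urel * dihedralRel (sr 0) * Urel) =
      Urel * dihedralRel (sr 0) * Urel := by
  have hUPU (x y : Htriads) : (Urel * dihedralRel (sr 0) * Urel) x y ↔
      ∃ z, Urel x (sr (0 : ZMod 3) • z) ∧ Urel z y :=
    exists_congr fun z => and_congr_left' (mul_permRel_apply _ _ _ _)
  have h : ∀ x y, (∃ z, Urel (augTritone⁻¹ x) (sr (0 : ZMod 3) • z) ∧ Urel z y) ↔
      ∃ z, Urel x (sr (0 : ZMod 3) • z) ∧ Urel z y := by decide +kernel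
  exact rel_ext fun x y => by rw [permRel_mul_apply, hUPU, hUPU, h]

theorem commute_dihedralRel_augTritone (g : DihedralGroup 3) :
    Commute (dihedralRel g) (permRel augTritone) := by
  have h : ∀ (g : DihedralGroup 3) x, g • augTritone x = augTritone (g • x) := by decide +kernel
  exact Commute.map (Equiv.ext (h g)) permRel

theorem commute_dihedralRel_triadTritone (g : DihedralGroup 3) :
    Commute (dihedralRel g) (permRel triadTritone) := by
  have h : ∀ (g : DihedralGroup 3) x, g • triadTritone x = triadTritone (g • x) := by
    decide +kernel
  exact Commute.map (Equiv.ext (h g)) permRel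

theorem commute_twist_dihedralRel (g : DihedralGroup 3) :
    Commute (permRel twist) (dihedralRel g) := by
  have h : ∀ (g : DihedralGroup 3) x, twist (g • x) = g • twist x := by decide +kernel
  exact Commute.map (Equiv.ext (h g)) permRel

theorem twist_mul_Urel : permRel twist * Urel =
    dihedralRel (sr 0) * Urel * dihedralRel (sr 0) * permRel twist := by
  have h : ∀ x y, Urel (twist⁻¹ x) y ↔
      Urel ((sr (0 : ZMod 3))⁻¹ • x) (sr (0 : ZMod 3) • twist y) := by decide +kernel
  have hPUP (x y : Htriads) : (dihedralRel (sr 0) * Urel * dihedralRel (sr 0)) x y ↔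
      Urel ((sr (0 : ZMod 3))⁻¹ • x) (sr (0 : ZMod 3) • y) :=
    (mul_permRel_apply _ _ _ _).trans (permRel_mul_apply _ _ _ _)
  exact rel_ext fun x y => by rw [permRel_mul_apply, mul_permRel_apply, hPUP, h]

end Triads

/-! ### The monoid `M_UPL` -/

section Monoid

open DihedralGroup

/-- The monoid `M_UPL`. -/
abbrev UPLMonoid : Submonoid MRel := Submonoid.closure {Urel, Prel, Lrel}

theorem Urel_mem : Urel ∈ UPLMonoid := Submonoid.subset_closure (by simp)

theorem dihedralRel_mem (g : DihedralGroup 3) : dihedralRel g ∈ UPLMonoid := by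
  suffices ⊤ ≤ UPLMonoid.comap dihedralRel from this (Submonoid.mem_top g)
  rw [← closure_sr_zero_sr_one 3, Submonoid.closure_le]
  rintro _ (rfl | rfl) <;>
    simp only [Submonoid.coe_comap, Set.mem_preimage, dihedralRel_sr_zero, dihedralRel_sr_one]
  · exact Submonoid.subset_closure (by simp)
  · exact Submonoid.subset_closure (by simp)

/-- The dihedral group of order 6 as a group of units of `M_UPL`. -/
def dihedralUnits : DihedralGroup 3 →* UPLMonoidˣ :=
  (dihedralRel.codRestrict UPLMonoid dihedralRel_mem).toHomUnits

/-- `𝒰` as an element of `M_UPL`. -/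
def uElem : UPLMonoid := ⟨Urel, Urel_mem⟩

theorem closure_insert_uElem_range :
    Submonoid.closure (insert uElem (Set.range fun g => (dihedralUnits g : UPLMonoid))) = ⊤ := by
  rw [← top_le_iff, ← Submonoid.closure_closure_coe_preimage]
  refine Submonoid.closure_mono ?_
  rintro ⟨c, _⟩ (rfl | rfl | rfl)
  · exact .inl rfl
  · exact .inr ⟨sr 0, Subtype.ext dihedralRel_sr_zero⟩
  · exact .inr ⟨sr 1, Subtype.ext dihedralRel_sr_one⟩

theorem dihedralUnits_injective : Function.Injective dihedralUnits := fun _ _ h =>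
  dihedralRel_injective (congrArg (fun v : UPLMonoidˣ => ((v : UPLMonoid) : MRel)) h)

theorem dihedralUnits_bijective : Function.Bijective dihedralUnits :=
  ⟨dihedralUnits_injective, surjective_units_of_closure_eq_top closure_insert_uElem_range
    (dihedralUnits_injective.ne_iff' (map_one _) |>.2 (show r 1 ≠ 1 by decide))
    (Subtype.ext (dihedralRel_r_mul_Urel 1))⟩

theorem commute_or_semiconjBy_tritone {c : MRel} (hc : c ∈ UPLMonoid) :
    Commute c (permRel augTritone) ∧ Commute c (permRel triadTritone) ∨
      SemiconjBy c (permRel augTritone) (permRel triadTritone) ∧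
        SemiconjBy c (permRel triadTritone) (permRel augTritone) := by
  refine commute_or_semiconjBy_of_mem_closure ?_ hc
  rintro _ (rfl | rfl | rfl)
  · exact .inr ⟨triadTritone_mul_Urel.symm, augTritone_mul_Urel.symm⟩
  · rw [← dihedralRel_sr_zero]
    exact .inl ⟨commute_dihedralRel_augTritone _, commute_dihedralRel_triadTritone _⟩
  · rw [← dihedralRel_sr_one]
    exact .inl ⟨commute_dihedralRel_augTritone _, commute_dihedralRel_triadTritone _⟩

theorem mul_Urel_mul_dihedralRel_mul_Urel_mul_ne {a : MRel} (ha : a ∈ UPLMonoid) (b : MRel) :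
    a * (Urel * dihedralRel (sr 0) * Urel) * b ≠ Urel :=
  mul_mul_ne_of_commute_or_semiconjBy (commute_or_semiconjBy_tritone ha)
    augTritone_mul_Urel_mul_dihedralRel_mul_Urel augTritone_mul_Urel_ne triadTritone_mul_Urel_ne b

theorem isSignedGenerator_uElem : IsSignedGenerator (dihedralUnits (sr 0)) uElem where
  sq_eq_one := by rw [← map_mul, sr_mul_self, map_one]
  units_mul v := by
    obtain ⟨g, rfl⟩ := dihedralUnits_bijective.surjective v
    simp only [Subtype.ext_iff]
    exact dihedralRel_mul_Urel g
  ne a b hab := mul_Urel_mul_dihedralRel_mul_Urel_mul_ne a.2 b (congrArg Subtype.val hab)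
  mul_mul_self := Subtype.ext Urel_mul_Urel_mul_Urel
  closure_eq_top := top_le_iff.1 <| closure_insert_uElem_range.ge.trans <|
    Submonoid.closure_mono <| Set.insert_subset_insert <| by
      rintro _ ⟨g, rfl⟩
      exact (dihedralUnits g).isUnit

/-- Conjugation by `twist`, as an automorphism of the monoid of all relations. -/
def twistAut : MulAut MRel := innerAut MRel (permRel.toHomUnits twist)

theorem twistAut_eq_of_mul_eq {a b : MRel} (h : permRel twist * a = b * permRel twist) :
    twistAut a = b :=
  (Units.mul_inv_eq_iff_eq_mul _).2 h

theorem twistAut_dihedralRel (g : DihedralGroup 3) : twistAut (dihedralRel g) = dihedralRel g :=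
  twistAut_eq_of_mul_eq (commute_twist_dihedralRel g)

theorem twistAut_Urel : twistAut Urel = dihedralRel (sr 0) * Urel * dihedralRel (sr 0) :=
  twistAut_eq_of_mul_eq twist_mul_Urel

theorem twistAut_twistAut (x : MRel) : twistAut (twistAut x) = x := by
  have h : twist * twist = 1 := Equiv.ext (Function.Involutive.toPerm_involutive _)
  rw [← MulAut.mul_apply, twistAut, ← map_mul, ← map_mul, h, map_one, map_one, MulAut.one_apply]

theorem map_twistAut_UPLMonoid : UPLMonoid.map (twistAut : MRel →* MRel) = UPLMonoid := by
  have hle : UPLMonoid ≤ UPLMonoid.comap (twistAut : MRel →* MRel) := by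
    rw [Submonoid.closure_le]
    rintro _ (rfl | rfl | rfl)
    · change twistAut Urel ∈ UPLMonoid
      rw [twistAut_Urel]
      exact mul_mem (mul_mem (dihedralRel_mem _) Urel_mem) (dihedralRel_mem _)
    · change twistAut Prel ∈ UPLMonoid
      rw [← dihedralRel_sr_zero, twistAut_dihedralRel]
      exact dihedralRel_mem _
    · change twistAut Lrel ∈ UPLMonoid
      rw [← dihedralRel_sr_one, twistAut_dihedralRel]
      exact dihedralRel_mem _
  exact le_antisymm (Submonoid.map_le_iff_le_comap.2 hle)
    fun x hx => ⟨twistAut x, hle hx, twistAut_twistAut x⟩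

/-- The automorphism of `M_UPL` induced by `twist`. -/
def twistAutUPL : MulAut UPLMonoid :=
  (MulEquiv.submonoidMap twistAut UPLMonoid).trans
    (MulEquiv.submonoidCongr map_twistAut_UPLMonoid)

theorem twistAutUPL_mem_ker_unitsAut : twistAutUPL ∈ (unitsAut UPLMonoid).ker := by
  rw [mem_ker_unitsAut]
  intro v
  obtain ⟨g, rfl⟩ := dihedralUnits_bijective.surjective v
  exact Subtype.ext (twistAut_dihedralRel g)

theorem twistAutUPL_uElem :
    twistAutUPL uElem = dihedralUnits (sr 0) * uElem * dihedralUnits (sr 0) :=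
  Subtype.ext twistAut_Urel

theorem card_ker_unitsAut_UPLMonoid : Nat.card (unitsAut UPLMonoid).ker = 2 :=
  isSignedGenerator_uElem.card_ker_unitsAut twistAutUPL_mem_ker_unitsAut twistAutUPL_uElem

end Monoid

end UPL

/-- the group of monoid automorphisms of `M_UPL` is isomorphic to
`DihedralGroup 3 × ℤ/2`. -/
theorem stmt8 :
    Nonempty (MulAut (Submonoid.closure ({Urel, Prel, Lrel} : Set MRel)) ≃*
      DihedralGroup 3 × Multiplicative (ZMod 2)) := by
  let e : DihedralGroup 3 ≃* UPL.UPLMonoidˣ :=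
    MulEquiv.ofBijective UPL.dihedralUnits UPL.dihedralUnits_bijective
  obtain ⟨f⟩ := UPL.nonempty_mulAut_mulEquiv_units_prod_ker
    (UPL.bijective_conj_of_mulEquiv e UPL.bijective_conj_dihedralGroup_three)
  have hcard : Nat.card (Multiplicative (ZMod 2)) = 2 := Nat.card_zmod 2
  exact ⟨f.trans (e.symm.prodCongr
    (mulEquivOfPrimeCardEq (p := 2) UPL.card_ker_unitsAut_UPLMonoid hcard))⟩
end
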